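/- For every dimension d ≥ 1 there exists p₀ such that for every p ≥ p₀ there exists N₀ (depending on p) such that for every integer N ≥ N₀ there exists γ₀ ∈ (0,1) (depending on N) such that for every γ ∈ (0, γ₀], every finite rectangle Λ ⊂ ℤ^d, every energy E ∈ ℝ, and every δ with γ^{diam(Λ)/2} ≤ δ < 1, the expected number of eigenvalues of the Anderson Hamiltonian H in I_δ(E) satisfies 𝔼 𝒩(I_δ(E)) ≤ |Λ| · (log_γ δ)^{−p}. -/

import Mathlib

noncomputable section

open scoped BigOperators

/-- ℓ¹ distance on `ℤ^d` (natural-number valued). -/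
def dist1 {d : ℕ} (x y : Fin d → ℤ) : ℕ := ∑ i, (x i - y i).natAbs

lemma dist1_comm {d : ℕ} (x y : Fin d → ℤ) : dist1 x y = dist1 y x :=
  Finset.sum_congr rfl fun i _ => by rw [← Int.natAbs_neg, neg_sub]

/-- ℓ¹ diameter of a finite subset of `ℤ^d`. -/
def diam1 {d : ℕ} (Λ : Finset (Fin d → ℤ)) : ℕ := (Λ ×ˢ Λ).sup fun p => dist1 p.1 p.2

/-- `Λ` is a (possibly empty) rectangle: a product of integer intervals. -/
def IsRect {d : ℕ} (Λ : Finset (Fin d → ℤ)) : Prop := ∃ a b : Fin d → ℤ, Λ = Finset.Icc a b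

/-- Entry of the Anderson Hamiltonian `H = H₀ - γ J` with potential `v`. -/
def hamEntry (d : ℕ) (γ : ℝ) (v : (Fin d → ℤ) → ℝ) (x y : Fin d → ℤ) : ℝ :=
  (if x = y then 2*d*γ + v x else 0) - γ * (if dist1 x y = 1 then 1 else 0)

/-- The Anderson Hamiltonian restricted to a finite set `X ⊂ ℤ^d`. -/
def hamOn (d : ℕ) (γ : ℝ) (v : (Fin d → ℤ) → ℝ) (X : Finset (Fin d → ℤ)) :
    Matrix X X ℝ := Matrix.of fun x y => hamEntry d γ v x y

lemma hamOn_isHermitian (d : ℕ) (γ : ℝ) (v : (Fin d → ℤ) → ℝ) (X : Finset (Fin d → ℤ)) :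
    (hamOn d γ v X).IsHermitian := by
  ext x y
  simp only [Matrix.conjTranspose_apply, hamOn, Matrix.of_apply, hamEntry, star_trivial]
  rw [dist1_comm]
  by_cases h : (y : Fin d → ℤ) = (x : Fin d → ℤ)
  · rw [if_pos h, if_pos h.symm, h]
  · rw [if_neg h, if_neg (show ¬((x : Fin d → ℤ) = (y : Fin d → ℤ)) from fun hh => h hh.symm)]

open scoped Classical in
/-- Number of eigenvalues (with multiplicity) of a Hermitian matrix in `[a,b]`. -/
def countEigIn {n : Type*} [Fintype n] [DecidableEq n] {M : Matrix n n ℝ}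
    (hM : M.IsHermitian) (a b : ℝ) : ℕ :=
  (Finset.univ.filter fun i => hM.eigenvalues i ∈ Set.Icc a b).card

/-- Expectation with respect to the uniform measure on a finite configuration space. -/
def expect {Ω : Type*} [Fintype Ω] (f : Ω → ℝ) : ℝ := (∑ ω, f ω) / Fintype.card Ω

open scoped Classical in
/-- Probability of an event with respect to the uniform measure on a finite space. -/
def prob {Ω : Type*} [Fintype Ω] (A : Ω → Prop) : ℝ :=
  ((Finset.univ.filter A).card : ℝ) / Fintype.card Ω

/-- The random potential determined by a configuration `ω : Λ → Fin N`:
the value at `x ∈ Λ` is `ω x / (N-1) ∈ {0, 1/(N-1), …, 1}`. -/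
def potential {d : ℕ} (N : ℕ) (Λ : Finset (Fin d → ℤ)) (ω : Λ → Fin N) :
    (Fin d → ℤ) → ℝ := fun x => if h : x ∈ Λ then (ω ⟨x, h⟩ : ℕ) / ((N : ℝ) - 1) else 0

/-!
The expected number of eigenvalues in `[E - δ, E + δ]` is the sum over `x` of the expected local
density of states at `x`, the value at `x` of a column of a spectral projection. Such a column
almost solves `(H - E) φ = 0`, so it is tiny at `x` when the box around `x` of the scale `L` with
`γ ^ (2 * L) ≥ δ` is good. Multiscale analysis bounds the probability of a bad box by a large power
of `1 / L`: at a bad box of the next scale either two distant boxes of the old scale are bad, which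
are independent events, or the bad sites form one cluster with a resonant neighbourhood. The values
of the potential being discrete, the probability of the latter is not controlled by varying one
site. Instead, unique continuation along a coordinate direction gives an approximate eigenfunction
whose sizes at some `L + 1` sites are comparable to distinct powers of `γ`. Varying the potential at
these sites, `∑ (v x - v' x) * φ x * φ' x` is then dominated by its first nonzero term, so at most
one configuration of the values there is resonant, which has probability `N ^ (-(L + 1))`.
-/

/-! ### The operator `H - E` on functions on `ℤ^d` -/

section Lattice

variable {d : ℕ}

-- `dist` on `Fin d → ℤ` is the sup metric, as opposed to the `ℓ¹` metric `dist1`.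
lemma dist_le_natCast_iff {x y : Fin d → ℤ} {n : ℕ} :
    dist x y ≤ n ↔ ∀ i, |x i - y i| ≤ (n : ℤ) := by
  rw [dist_pi_le_iff n.cast_nonneg]
  refine forall_congr' fun i => ?_
  rw [Int.dist_eq]
  exact_mod_cast Iff.rfl

lemma mem_Icc_pi_iff {lo hi x : Fin d → ℤ} :
    x ∈ Finset.Icc lo hi ↔ ∀ i, lo i ≤ x i ∧ x i ≤ hi i := by
  rw [Finset.mem_Icc, Pi.le_def, Pi.le_def, forall_and]

/-- The unit vectors `± e_i` of `ℤ^d`. -/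
def unitVec (u : Fin d × ℤˣ) : Fin d → ℤ := Pi.single u.1 (u.2 : ℤ)

/-- The operator `H - E` acting on functions on `ℤ^d`; on functions supported in a finite set `X`
it agrees on `X` with `hamOn d γ v X - E`. -/
def hamSub (γ E : ℝ) (v ψ : (Fin d → ℤ) → ℝ) (x : Fin d → ℤ) : ℝ :=
  (2 * d * γ + v x - E) * ψ x - γ * ∑ u, ψ (x + unitVec u)

lemma dist_add_unitVec_le (x : Fin d → ℤ) (u : Fin d × ℤˣ) : dist x (x + unitVec u) ≤ 1 := by
  rw [← Nat.cast_one, dist_le_natCast_iff]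
  intro i
  obtain ⟨k, σ⟩ := u
  by_cases hik : i = k
  · subst hik
    obtain rfl | rfl := Int.units_eq_one_or σ <;> simp [unitVec]
  · simp [unitVec, hik]

lemma abs_sum_le_of_abs_le {f : Fin d × ℤˣ → ℝ} {m : ℝ} (h : ∀ u, |f u| ≤ m) :
    |∑ u, f u| ≤ 2 * d * m := by
  calc |∑ u, f u| ≤ ∑ u, |f u| := Finset.abs_sum_le_sum_abs _ _
    _ ≤ ∑ _u : Fin d × ℤˣ, m := Finset.sum_le_sum fun u _ => h u
    _ = 2 * d * m := by simp [Fintype.card_units_int, mul_comm]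

lemma hamSub_sub_of_eq {γ E : ℝ} {v ψ φ : (Fin d → ℤ) → ℝ} {x : Fin d → ℤ} (h : φ x = ψ x) :
    hamSub γ E v φ x =
      hamSub γ E v ψ x + γ * ∑ u, (ψ (x + unitVec u) - φ (x + unitVec u)) := by
  simp only [hamSub, h, Finset.sum_sub_distrib]
  ring

end Lattice

/-! ### Iterating a contractive estimate -/

section Iteration

variable {X : Type*} {g : X → ℝ} {a ε m : ℝ}

lemma le_of_contraction_chain (ha : 0 ≤ a) (hε : 0 ≤ ε) (hε2 : ε ≤ 1 / 2) (hm : 0 ≤ m) {j : ℕ}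
    {S : ℕ → Set X}
    (hstep : ∀ i < j, ∀ c, 0 ≤ c → (∀ y ∈ S (i + 1), g y ≤ c) → ∀ x ∈ S i, g x ≤ a + ε * c)
    (h : ∀ y ∈ S j, g y ≤ m) {x : X} (hx : x ∈ S 0) : g x ≤ 2 * a + ε ^ j * m := by
  induction j generalizing S x with
  | zero => linarith [h x hx]
  | succ j ih =>
    have hshift : ∀ y ∈ S 1, g y ≤ 2 * a + ε ^ j * m := fun y hy =>
      ih (S := fun i => S (i + 1)) (fun i hi => hstep (i + 1) (by lia)) h hy
    have hεa : ε * (2 * a) ≤ a := by nlinarith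
    calc g x ≤ a + ε * (2 * a + ε ^ j * m) :=
          hstep 0 j.succ_pos _ (by positivity) hshift x hx
      _ = a + ε * (2 * a) + ε ^ (j + 1) * m := by ring
      _ ≤ 2 * a + ε ^ (j + 1) * m := by linarith

lemma le_of_contraction_ball [PseudoMetricSpace X] (ha : 0 ≤ a) (hε : 0 ≤ ε) (hε2 : ε ≤ 1 / 2)
    (hm : 0 ≤ m) {ρ : ℝ} (hρ : 0 ≤ ρ) {z : X} {j : ℕ}
    (hstep : ∀ y, dist z y ≤ (j - 1) * ρ → ∀ c, 0 ≤ c → (∀ w, dist y w ≤ ρ → g w ≤ c) →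
      g y ≤ a + ε * c)
    (h : ∀ y, dist z y ≤ j * ρ → g y ≤ m) : g z ≤ 2 * a + ε ^ j * m := by
  refine le_of_contraction_chain (S := fun i => {y | dist z y ≤ i * ρ}) ha hε hε2 hm
    (fun i hi c hc hball y hy => hstep y ?_ c hc fun w hw => hball w ?_) h (by simp)
  · have : (i : ℝ) + 1 ≤ j := by exact_mod_cast hi
    exact (Set.mem_ofPred.1 hy).trans (mul_le_mul_of_nonneg_right (by linarith) hρ)
  · have := dist_triangle z y w
    rw [Set.mem_ofPred] at hy ⊢
    push_cast
    linarith

end Iteration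

/-! ### Good boxes -/

section GoodBox

variable {d : ℕ}

/-- The box `S` is good at the scale `L` around `x`: approximate solutions of `(H - E) ψ = 0` on
`S` are small at `x`, up to the size of the error and a factor `γ ^ e` times their size nearby.
This is the estimate on the Green function of `S` that the multiscale analysis propagates. -/
def IsGoodBox (γ E : ℝ) (v : (Fin d → ℤ) → ℝ) (L e : ℕ) (S : Finset (Fin d → ℤ))
    (x : Fin d → ℤ) : Prop :=
  ∀ (ψ : (Fin d → ℤ) → ℝ) (F m : ℝ), 0 ≤ F → 0 ≤ m →
    (∀ y ∉ S, dist x y ≤ L → ψ y = 0) → (∀ y ∈ S, |hamSub γ E v ψ y| ≤ F) →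
    (∀ y, dist x y ≤ L + 1 → |ψ y| ≤ m) → |ψ x| ≤ F / γ ^ L + γ ^ e * m

/-- `Icc lo hi` contains `x`, lies in the cube of radius `L` around `x`, and has length at least
`L` in the direction `a`. -/
def IsAdmissibleBox (a : Fin d) (L : ℕ) (x lo hi : Fin d → ℤ) : Prop :=
  (∀ i, lo i ≤ x i ∧ x i ≤ hi i ∧ x i - L ≤ lo i ∧ hi i ≤ x i + L) ∧ lo a + L ≤ hi a

/-- All admissible boxes around `x` contained in `R` are good. -/
def IsGoodSite (γ E : ℝ) (v : (Fin d → ℤ) → ℝ) (a : Fin d) (L e : ℕ) (R : Finset (Fin d → ℤ))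
    (x : Fin d → ℤ) : Prop :=
  ∀ lo hi : Fin d → ℤ, IsAdmissibleBox a L x lo hi → Finset.Icc lo hi ⊆ R →
    IsGoodBox γ E v L e (Finset.Icc lo hi) x

/-- The inverse of `H - E` on `U`, with zero boundary conditions, has norm at most `γ ^ (-n)` in
`ℓ^∞`. -/
def NonResonant (γ E : ℝ) (v : (Fin d → ℤ) → ℝ) (n : ℕ) (U : Finset (Fin d → ℤ)) : Prop :=
  ∀ (φ : (Fin d → ℤ) → ℝ) (F : ℝ), 0 ≤ F → (∀ y ∉ U, φ y = 0) →
    (∀ y ∈ U, |hamSub γ E v φ y| ≤ F) → ∀ x, |φ x| ≤ F / γ ^ n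

variable {γ E : ℝ} {v : (Fin d → ℤ) → ℝ} {a : Fin d} {L e : ℕ} {lo hi x : Fin d → ℤ}
  {ψ : (Fin d → ℤ) → ℝ} {F m : ℝ}

lemma exists_isAdmissibleBox (hside : lo a + L ≤ hi a) (hx : x ∈ Finset.Icc lo hi) :
    ∃ lo' hi', IsAdmissibleBox a L x lo' hi' ∧
      ∀ y, y ∈ Finset.Icc lo' hi' ↔ y ∈ Finset.Icc lo hi ∧ dist x y ≤ L := by
  rw [mem_Icc_pi_iff] at hx
  refine ⟨fun i => max (lo i) (x i - L), fun i => min (hi i) (x i + L), ⟨fun i => ?_, ?_⟩,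
    fun y => ?_⟩
  · have := hx i
    lia
  · have := hx a
    lia
  · simp only [mem_Icc_pi_iff, dist_le_natCast_iff, abs_le, ← forall_and]
    exact forall_congr' fun i => by lia

lemma abs_le_of_isGoodSite (hγ : 0 < γ) (hF : 0 ≤ F) (hm : 0 ≤ m) (hside : lo a + L ≤ hi a)
    {R : Finset (Fin d → ℤ)} (hR : Finset.Icc lo hi ⊆ R)
    (hgood : x ∈ Finset.Icc lo hi → IsGoodSite γ E v a L e R x)
    (h0 : ∀ y ∉ Finset.Icc lo hi, dist x y ≤ L → ψ y = 0)
    (hA : ∀ y ∈ Finset.Icc lo hi, |hamSub γ E v ψ y| ≤ F)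
    (hψ : ∀ y, dist x y ≤ L + 1 → |ψ y| ≤ m) : |ψ x| ≤ F / γ ^ L + γ ^ e * m := by
  by_cases hx : x ∈ Finset.Icc lo hi
  · obtain ⟨lo', hi', hadm, hmem⟩ := exists_isAdmissibleBox hside hx
    exact hgood hx lo' hi' hadm (fun y hy => hR ((hmem y).1 hy).1) ψ F m hF hm
      (fun y hy hxy => h0 y (fun hy' => hy ((hmem y).2 ⟨hy', hxy⟩)) hxy)
      (fun y hy => hA y ((hmem y).1 hy).1) hψ
  · rw [h0 x hx (by simp), abs_zero]
    positivity

end GoodBox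

/-! ### The deterministic induction step -/

section Deterministic

variable {d : ℕ} {γ E : ℝ} {v : (Fin d → ℤ) → ℝ} {a : Fin d} {L e : ℕ} {lo hi b : Fin d → ℤ}
  {ψ : (Fin d → ℤ) → ℝ} {F m : ℝ}

lemma pow_le_half_of_le_half {n : ℕ} (hγ : 0 < γ) (hγ2 : γ ≤ 1 / 2) (hn : n ≠ 0) :
    γ ^ n ≤ 1 / 2 :=
  (pow_le_of_le_one hγ.le (by linarith) hn).trans hγ2

lemma abs_le_of_dist_resonance (hγ : 0 < γ) (hγ2 : γ ≤ 1 / 2) (hL : 4 ≤ L) (he : e ≠ 0)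
    (hF : 0 ≤ F) (hm : 0 ≤ m) (hside : lo a + L ≤ hi a)
    (hgood : ∀ x ∈ Finset.Icc lo hi, 2 * L < dist b x →
      IsGoodSite γ E v a L e (Finset.Icc lo hi) x)
    (h0 : ∀ y ∉ Finset.Icc lo hi, dist b y ≤ 50 * L → ψ y = 0)
    (hA : ∀ y ∈ Finset.Icc lo hi, |hamSub γ E v ψ y| ≤ F)
    (hψ : ∀ y, dist b y ≤ 50 * L → |ψ y| ≤ m) {w : Fin d → ℤ} (hw : 24 * L < dist b w)
    (hw' : dist b w ≤ 24 * L + 1) : |ψ w| ≤ 2 * (F / γ ^ L) + (γ ^ e) ^ 18 * m := by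
  have hL' : (4 : ℝ) ≤ L := by exact_mod_cast hL
  refine le_of_contraction_ball (g := fun y => |ψ y|) (ρ := L + 1) (j := 18) (by positivity)
    (by positivity) (pow_le_half_of_le_half hγ hγ2 he) hm (by positivity)
    (fun y hy c hc hball => ?_) fun y hy => hψ y ?_
  · have hwy := dist_triangle_right b w y
    have hbw := dist_triangle b w y
    push_cast at hy
    refine abs_le_of_isGoodSite hγ hF hc hside subset_rfl
      (fun hyR => hgood y hyR (by linarith [dist_comm y w]))
      (fun w' hw' hyw' => h0 w' hw' ?_) hA hball
    linarith [dist_triangle b y w']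
  · have hbw := dist_triangle b w y
    push_cast at hy
    linarith

lemma abs_hamSub_indicator_le (hγ : 0 < γ) {U : Finset (Fin d → ℤ)}
    {mb : ℝ} (hmb : ∀ y ∈ U, ∀ u, y + unitVec u ∉ U → |ψ (y + unitVec u)| ≤ mb) (hmb0 : 0 ≤ mb)
    {y : Fin d → ℤ} (hy : y ∈ U) (hA : |hamSub γ E v ψ y| ≤ F) :
    |hamSub γ E v (Set.indicator U ψ) y| ≤ F + γ * (2 * d * mb) := by
  rw [hamSub_sub_of_eq (ψ := ψ) (by simp [hy])]
  refine (abs_add_le _ _).trans (add_le_add hA ?_)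
  rw [abs_mul, abs_of_pos hγ]
  refine mul_le_mul_of_nonneg_left (abs_sum_le_of_abs_le fun u => ?_) hγ.le
  by_cases hu : y + unitVec u ∈ U
  · simpa [hu] using hmb0
  · simpa [hu] using hmb y hy u hu

lemma resonance_error_le (hγ : 0 < γ) (hγd : 8 * d * γ ≤ 1) (hγ8 : γ ≤ 1 / 8) (hL : L ≠ 0)
    (hLe : L ≤ 2 * e) (hF : 0 ≤ F) (hm : 0 ≤ m) :
    (F + γ * (2 * d * (2 * (F / γ ^ L) + (γ ^ e) ^ 18 * m))) / γ ^ (7 * L) ≤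
      F / γ ^ (9 * L) + γ ^ e * m := by
  have hγ1 : γ ≤ 1 := by linarith
  have hγL : γ ^ L ≤ 1 / 8 := (pow_le_of_le_one hγ.le hγ1 hL).trans hγ8
  set G := F / γ ^ L with hG
  have hG0 : 0 ≤ G := by positivity
  have hFG : F = G * γ ^ L := by rw [hG]; field_simp
  set δ := (γ ^ e) ^ 18 * m with hδ
  have hδ0 : 0 ≤ δ := by positivity
  have hboundary : F + γ * (2 * d * (2 * G + δ)) ≤ G + δ := by nlinarith
  have hsource : G / γ ^ (7 * L) ≤ F / γ ^ (9 * L) := by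
    rw [hFG, div_le_div_iff₀ (by positivity) (by positivity)]
    calc G * γ ^ (9 * L) ≤ G * γ ^ (8 * L) :=
          mul_le_mul_of_nonneg_left (pow_le_pow_of_le_one hγ.le hγ1 (by lia)) hG0
      _ = G * γ ^ L * γ ^ (7 * L) := by ring
  have hδ_le : δ / γ ^ (7 * L) ≤ γ ^ e * m := by
    rw [div_le_iff₀ (by positivity), hδ, ← pow_mul]
    calc γ ^ (e * 18) * m ≤ γ ^ (e + 7 * L) * m :=
          mul_le_mul_of_nonneg_right (pow_le_pow_of_le_one hγ.le hγ1 (by lia)) hm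
      _ = γ ^ e * m * γ ^ (7 * L) := by ring
  calc _ ≤ (G + δ) / γ ^ (7 * L) := by gcongr
    _ ≤ _ := by rw [add_div]; exact add_le_add hsource hδ_le

lemma abs_le_near_resonance (hγ : 0 < γ) (hγd : 8 * d * γ ≤ 1) (hγ8 : γ ≤ 1 / 8) (hL : 4 ≤ L)
    (hLe : L ≤ 2 * e) (hF : 0 ≤ F) (hm : 0 ≤ m) (hside : lo a + L ≤ hi a)
    (hgood : ∀ x ∈ Finset.Icc lo hi, 2 * L < dist b x →
      IsGoodSite γ E v a L e (Finset.Icc lo hi) x)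
    {U : Finset (Fin d → ℤ)} (hU : ∀ x, x ∈ U ↔ x ∈ Finset.Icc lo hi ∧ dist b x ≤ 24 * L)
    (hNR : NonResonant γ E v (7 * L) U)
    (h0 : ∀ y ∉ Finset.Icc lo hi, dist b y ≤ 50 * L → ψ y = 0)
    (hA : ∀ y ∈ Finset.Icc lo hi, |hamSub γ E v ψ y| ≤ F)
    (hψ : ∀ y, dist b y ≤ 50 * L → |ψ y| ≤ m) {x : Fin d → ℤ} (hx : dist b x ≤ 2 * L) :
    |ψ x| ≤ F / γ ^ (9 * L) + γ ^ e * m := by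
  have hL' : (4 : ℝ) ≤ L := by exact_mod_cast hL
  set mb := 2 * (F / γ ^ L) + (γ ^ e) ^ 18 * m
  have hmb0 : 0 ≤ mb := by positivity
  have hboundary : ∀ y ∈ U, ∀ u, y + unitVec u ∉ U → |ψ (y + unitVec u)| ≤ mb := by
    intro y hy u hu
    have hbu : dist b (y + unitVec u) ≤ 24 * L + 1 :=
      (dist_triangle b y _).trans (add_le_add ((hU y).1 hy).2 (dist_add_unitVec_le y u))
    by_cases huR : y + unitVec u ∈ Finset.Icc lo hi
    · have hub : 24 * L < dist b (y + unitVec u) := not_le.1 fun h => hu ((hU _).2 ⟨huR, h⟩)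
      exact abs_le_of_dist_resonance hγ (by linarith) hL (by lia) hF hm hside hgood h0 hA hψ hub hbu
    · rw [h0 _ huR (by linarith), abs_zero]
      exact hmb0
  by_cases hxR : x ∈ Finset.Icc lo hi
  · have hxU : x ∈ U := (hU x).2 ⟨hxR, by linarith⟩
    have hcutoff := hNR (Set.indicator U ψ) (F + γ * (2 * d * mb)) (by positivity)
      (fun y hy => by simp [hy])
      (fun y hy => abs_hamSub_indicator_le hγ hboundary hmb0 hy (hA y ((hU y).1 hy).1)) x
    rw [Set.indicator_of_mem (Finset.mem_coe.2 hxU)] at hcutoff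
    exact hcutoff.trans (resonance_error_le hγ hγd hγ8 (by lia) hLe hF hm)
  · rw [h0 x hxR (by linarith), abs_zero]
    positivity

/-- Radii of the concentric balls around `z` along which the induction step propagates smallness.
Once the ball comes close to a resonance at distance `D`, the radius jumps by `52 * L`, so that the
next ball contains the surroundings of the resonance. -/
def chainRadius (L : ℕ) (D : ℝ) (i : ℕ) : ℝ :=
  i * (L + 1) + if i * (L + 1) + 2 * L < D then (0 : ℝ) else 52 * L

lemma chainRadius_add_le {D : ℝ} (i : ℕ) :
    chainRadius L D i + (L + 1) ≤ chainRadius L D (i + 1) := by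
  have : (0 : ℝ) ≤ L := L.cast_nonneg
  unfold chainRadius
  push_cast
  split_ifs <;> nlinarith

lemma add_le_chainRadius_succ {D : ℝ} {i : ℕ} (hD : D ≤ chainRadius L D i + 2 * L) :
    D + 50 * L ≤ chainRadius L D (i + 1) := by
  have : (0 : ℝ) ≤ L := L.cast_nonneg
  unfold chainRadius at *
  push_cast
  split_ifs at * <;> nlinarith

lemma chainRadius_le {D : ℝ} {i M : ℕ} (hi : i + 60 ≤ M) (hML : M ≤ L) :
    chainRadius L D i ≤ M * L - 7 * L := by
  have hi' : (i : ℝ) + 60 ≤ M := by exact_mod_cast hi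
  have hML' : (M : ℝ) ≤ L := by exact_mod_cast hML
  have : (0 : ℝ) ≤ L := L.cast_nonneg
  unfold chainRadius
  split_ifs <;> nlinarith

lemma chainRadius_nonneg {D : ℝ} {i : ℕ} : 0 ≤ chainRadius L D i := by
  unfold chainRadius
  positivity

lemma abs_le_chain_step {z : Fin d → ℤ} {M i : ℕ} (hγ : 0 < γ) (hγd : 8 * d * γ ≤ 1)
    (hγ8 : γ ≤ 1 / 8) (hM : 60 ≤ M) (hML : M ≤ L) (hLe : L ≤ 2 * e) (hiM : i < M - 60)
    (hF : 0 ≤ F) (hm : 0 ≤ m) (hside : lo a + L ≤ hi a)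
    (hgood : ∀ x ∈ Finset.Icc lo hi, 2 * L < dist b x →
      IsGoodSite γ E v a L e (Finset.Icc lo hi) x)
    {U : Finset (Fin d → ℤ)} (hU : ∀ x, x ∈ U ↔ x ∈ Finset.Icc lo hi ∧ dist b x ≤ 24 * L)
    (hNR : NonResonant γ E v (7 * L) U)
    (h0 : ∀ y ∉ Finset.Icc lo hi, dist z y ≤ M * L → ψ y = 0)
    (hA : ∀ y ∈ Finset.Icc lo hi, |hamSub γ E v ψ y| ≤ F)
    (hψ : ∀ y, dist z y ≤ chainRadius L (dist z b) (i + 1) → |ψ y| ≤ m) {x : Fin d → ℤ}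
    (hx : dist z x ≤ chainRadius L (dist z b) i) :
    |ψ x| ≤ F / γ ^ (9 * L) + γ ^ e * m := by
  have hradius := chainRadius_le (D := dist z b) (show i + 1 + 60 ≤ M by lia) hML
  have hsucc := chainRadius_add_le (L := L) (D := dist z b) i
  have : (0 : ℝ) ≤ L := L.cast_nonneg
  rcases lt_or_ge (2 * L : ℝ) (dist b x) with hbx | hbx
  · have hstep : |ψ x| ≤ F / γ ^ L + γ ^ e * m :=
      abs_le_of_isGoodSite hγ hF hm hside subset_rfl (fun hxR => hgood x hxR hbx)
        (fun y hy hxy => h0 y hy (by linarith [dist_triangle z x y])) hA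
        (fun y hxy => hψ y (by linarith [dist_triangle z x y]))
    have hpow : γ ^ (9 * L) ≤ γ ^ L := pow_le_pow_of_le_one hγ.le (by linarith) (by lia)
    exact hstep.trans (by gcongr)
  · have hjump : dist z b + 50 * L ≤ chainRadius L (dist z b) (i + 1) :=
      add_le_chainRadius_succ (by linarith [dist_triangle_right z b x])
    exact abs_le_near_resonance hγ hγd hγ8 (by lia) hLe hF hm hside hgood hU hNR
      (fun y hy hby => h0 y hy (by linarith [dist_triangle z b y])) hA
      (fun y hby => hψ y (by linarith [dist_triangle z b y])) hbx

theorem isGoodBox_of_nonResonant {z : Fin d → ℤ} {M : ℕ} (hγ : 0 < γ) (hγd : 8 * d * γ ≤ 1)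
    (hγ8 : γ ≤ 1 / 8) (hM : 60 ≤ M) (hML : M ≤ L) (hLe : L ≤ 2 * e) (hside : lo a + L ≤ hi a)
    (hgood : ∀ x ∈ Finset.Icc lo hi, 2 * L < dist b x →
      IsGoodSite γ E v a L e (Finset.Icc lo hi) x)
    {U : Finset (Fin d → ℤ)} (hU : ∀ x, x ∈ U ↔ x ∈ Finset.Icc lo hi ∧ dist b x ≤ 24 * L)
    (hNR : NonResonant γ E v (7 * L) U) :
    IsGoodBox γ E v (M * L) (e * (M - 60)) (Finset.Icc lo hi) z := by
  intro ψ F m hF hm h0 hA hψ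
  have hγ1 : γ ≤ 1 := by linarith
  push_cast at h0 hψ
  have : (0 : ℝ) ≤ L := L.cast_nonneg
  have hchain : |ψ z| ≤ 2 * (F / γ ^ (9 * L)) + (γ ^ e) ^ (M - 60) * m :=
    le_of_contraction_chain (g := fun y => |ψ y|)
      (S := fun i => {x | dist z x ≤ chainRadius L (dist z b) i}) (by positivity) (by positivity)
      (pow_le_half_of_le_half hγ (by linarith) (by lia)) hm
      (fun i hi c hc hball x hx =>
        abs_le_chain_step hγ hγd hγ8 hM hML hLe hi hF hc hside hgood hU hNR h0 hA hball hx)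
      (fun y hy => hψ y (by
        have := chainRadius_le (D := dist z b) (show M - 60 + 60 ≤ M by lia) hML
        rw [Set.mem_ofPred] at hy
        linarith))
      (by simpa using chainRadius_nonneg)
  have herror : 2 * (F / γ ^ (9 * L)) ≤ F / γ ^ (M * L) := by
    have hpow : γ ^ (M * L) ≤ γ ^ (9 * L + 1) :=
      pow_le_pow_of_le_one hγ.le hγ1 (by nlinarith)
    rw [pow_succ] at hpow
    have h9L : 0 < γ ^ (9 * L) := by positivity
    have hhalf : 2 * γ ^ (M * L) ≤ γ ^ (9 * L) := by nlinarith
    rw [← mul_div_assoc, div_le_div_iff₀ (by positivity) (by positivity)]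
    linarith [mul_le_mul_of_nonneg_left hhalf hF]
  rw [pow_mul γ e]
  linarith

end Deterministic

/-! ### Records of resonant functions -/

section Record

variable {d : ℕ} {γ E : ℝ} {v φ : (Fin d → ℤ) → ℝ} {a : Fin d} {L e n : ℕ}
  {lo hi b : Fin d → ℤ} {U : Finset (Fin d → ℤ)}

lemma hamSub_const_mul (γ E : ℝ) (v φ : (Fin d → ℤ) → ℝ) (c : ℝ) (x : Fin d → ℤ) :
    hamSub γ E v (fun y => c * φ y) x = c * hamSub γ E v φ x := by
  simp only [hamSub, ← Finset.mul_sum]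
  ring

lemma exists_normalized_of_not_nonResonant (hγ : 0 < γ) (h : ¬ NonResonant γ E v n U) :
    ∃ φ : (Fin d → ℤ) → ℝ, (∀ y ∉ U, φ y = 0) ∧ (∀ y, |φ y| ≤ 1) ∧
      (∀ y ∈ U, |hamSub γ E v φ y| ≤ γ ^ n) ∧ ∃ y ∈ U, |φ y| = 1 := by
  simp only [NonResonant, not_forall, not_le] at h
  obtain ⟨φ, F, hF, h0, hA, x, hx⟩ := h
  have hx0 : 0 < |φ x| := lt_of_le_of_lt (by positivity) hx
  have hxU : x ∈ U := not_imp_comm.1 (h0 x) (abs_pos.1 hx0)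
  obtain ⟨y₀, hy₀, hmax⟩ := Finset.exists_max_image U (fun y => |φ y|) ⟨x, hxU⟩
  set μ := |φ y₀|
  have hμ0 : 0 < μ := hx0.trans_le (hmax x hxU)
  refine ⟨fun y => μ⁻¹ * φ y, fun y hy => by simp [h0 y hy], fun y => ?_, fun y hy => ?_,
    y₀, hy₀, ?_⟩
  · rw [abs_mul, abs_of_pos (inv_pos.2 hμ0), inv_mul_le_iff₀ hμ0, mul_one]
    by_cases hy : y ∈ U
    · exact hmax y hy
    · simpa [h0 y hy] using hμ0.le
  · rw [hamSub_const_mul, abs_mul, abs_of_pos (inv_pos.2 hμ0), inv_mul_le_iff₀ hμ0]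
    calc |hamSub γ E v φ y| ≤ F := hA y hy
      _ ≤ |φ x| * γ ^ n := ((div_lt_iff₀ (by positivity)).1 hx).le
      _ ≤ μ * γ ^ n := by gcongr; exact hmax x hxU
  · rw [abs_mul, abs_of_pos (inv_pos.2 hμ0), inv_mul_cancel₀ hμ0.ne']

/-- The vectors of `ℤ^d` with sup norm at most `2`, the possible steps between points at which
unique continuation keeps a resonant function from decaying too fast. -/
abbrev ShortStep (d : ℕ) : Finset (Fin d → ℤ) := Finset.Icc (-2) 2

lemma unitVec_mem_shortStep (a : Fin d) (σ : ℤˣ) :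
    unitVec (a, σ) ∈ ShortStep d ∧ 1 ≤ (σ : ℤ) * unitVec (a, σ) a := by
  simp only [mem_Icc_pi_iff, unitVec, Pi.single_apply, Pi.neg_apply, Pi.ofNat_apply]
  obtain rfl | rfl := Int.units_eq_one_or σ <;>
    exact ⟨fun i => by split_ifs <;> simp, by simp⟩

lemma unitVec_add_unitVec_mem_shortStep {σ : ℤˣ} {u : Fin d × ℤˣ} (hu : u ≠ (a, -σ)) :
    unitVec (a, σ) + unitVec u ∈ ShortStep d ∧
      1 ≤ (σ : ℤ) * (unitVec (a, σ) + unitVec u) a := by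
  obtain ⟨k, τ⟩ := u
  simp only [mem_Icc_pi_iff, unitVec, Pi.single_apply, Pi.neg_apply, Pi.ofNat_apply, Pi.add_apply]
  rw [ne_eq, Prod.mk.injEq, not_and] at hu
  obtain rfl | rfl := Int.units_eq_one_or σ <;> obtain rfl | rfl := Int.units_eq_one_or τ <;>
    refine ⟨fun i => by split_ifs <;> simp, ?_⟩ <;> by_cases h : k = a <;>
      simp_all [eq_comm (a := a)]

lemma add_unitVec_add_unitVec_neg (x : Fin d → ℤ) (a : Fin d) (σ : ℤˣ) :
    x + unitVec (a, σ) + unitVec (a, -σ) = x := by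
  simp [unitVec, add_assoc, ← Pi.single_add]

-- If `φ` were smaller than `γ ^ 2 * |φ x|` at all these points, the equation at the neighbour
-- `x + σ e_a` of `x` would determine a value at `x` that is too small.
lemma exists_shortStep_le_abs (hγ : 0 < γ) (hγd : 8 * d * γ ≤ 1) (hγ8 : γ ≤ 1 / 8) {σ : ℤˣ}
    {x : Fin d → ℤ} (hx : φ x ≠ 0) (hdiag : |2 * d * γ + v (x + unitVec (a, σ)) - E| ≤ 2)
    (hA : |hamSub γ E v φ (x + unitVec (a, σ))| ≤ γ ^ 2 * |φ x|) :
    ∃ h ∈ ShortStep d, 1 ≤ (σ : ℤ) * h a ∧ γ ^ 2 * |φ x| ≤ |φ (x + h)| := by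
  by_contra! hsmall
  set z := x + unitVec (a, σ) with hz
  set W := 2 * d * γ + v z - E
  have hφz : |φ z| ≤ γ ^ 2 * |φ x| :=
    (hsmall _ (unitVec_mem_shortStep a σ).1 (unitVec_mem_shortStep a σ).2).le
  set S := ∑ u, (φ (z + unitVec u) - if u = (a, -σ) then φ x else 0) with hS
  have hS_le : |S| ≤ 2 * d * (γ ^ 2 * |φ x|) := abs_sum_le_of_abs_le fun u => by
    by_cases hu : u = (a, -σ)
    · rw [hu, if_pos rfl, hz, add_unitVec_add_unitVec_neg, sub_self, abs_zero]
      positivity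
    · rw [if_neg hu, sub_zero, hz, add_assoc]
      exact (hsmall _ (unitVec_add_unitVec_mem_shortStep hu).1
        (unitVec_add_unitVec_mem_shortStep hu).2).le
  have hφx : γ * φ x = W * φ z - γ * S - hamSub γ E v φ z := by
    simp only [hS, hamSub, Finset.sum_sub_distrib, Finset.sum_ite_eq', Finset.mem_univ, if_true]
    ring
  have hupper : γ * |φ x| ≤ |W| * |φ z| + γ * |S| + |hamSub γ E v φ z| := by
    rw [← abs_of_pos hγ, ← abs_mul, ← abs_mul, ← abs_mul, abs_of_pos hγ, hφx]
    exact (abs_sub _ _).trans (add_le_add_left (abs_sub _ _) _)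
  have hWφ : |W| * |φ z| ≤ 2 * (γ ^ 2 * |φ x|) :=
    mul_le_mul hdiag hφz (abs_nonneg _) (by norm_num)
  have hγS : γ * |S| ≤ γ * (2 * d * (γ ^ 2 * |φ x|)) := by gcongr
  have : γ * |φ x| ≤ (γ * |φ x|) * (3 * γ + (2 * d * γ) * γ) := by linarith
  have : 3 * γ + (2 * d * γ) * γ < 1 := by nlinarith
  have : 0 < γ * |φ x| := mul_pos hγ (abs_pos.2 hx)
  nlinarith

lemma abs_diag_le (hγ : 0 < γ) (hγd : 8 * d * γ ≤ 1) (hγ8 : γ ≤ 1 / 8) (hn : n ≠ 0)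
    (hv : ∀ x, v x ∈ Set.Icc 0 1) (hφ : ∀ y, |φ y| ≤ 1) {y : Fin d → ℤ}
    (hA : |hamSub γ E v φ y| ≤ γ ^ n) (hy : |φ y| = 1) (x : Fin d → ℤ) :
    |2 * d * γ + v x - E| ≤ 2 := by
  have hhop : |∑ u, φ (y + unitVec u)| ≤ 2 * d * 1 := abs_sum_le_of_abs_le fun u => hφ _
  have hpow : γ ^ n ≤ γ := pow_le_of_le_one hγ.le (by linarith) hn
  have hdiag : |2 * d * γ + v y - E| ≤ γ ^ n + γ * (2 * d * 1) := by
    calc |2 * d * γ + v y - E| = |hamSub γ E v φ y + γ * ∑ u, φ (y + unitVec u)| := by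
          rw [hamSub, sub_add_cancel, abs_mul, hy, mul_one]
      _ ≤ |hamSub γ E v φ y| + γ * |∑ u, φ (y + unitVec u)| :=
          (abs_add_le _ _).trans_eq (by rw [abs_mul γ, abs_of_pos hγ])
      _ ≤ γ ^ n + γ * (2 * d * 1) := by gcongr
  have hx := hv x
  have hy := hv y
  simp only [Set.mem_Icc] at hx hy
  rw [abs_le] at hdiag ⊢
  constructor <;> linarith

lemma exists_direction (hL : 1 ≤ L) (hside : lo a + 48 * L ≤ hi a)
    (hU : ∀ x, x ∈ U ↔ x ∈ Finset.Icc lo hi ∧ dist b x ≤ 24 * L) :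
    ∃ σ : ℤˣ, ∀ x ∈ U, dist b x ≤ 9 * L + 7 → x + unitVec (a, σ) ∈ U := by
  have hU' : ∀ x, x ∈ U ↔ ∀ i, (lo i ≤ x i ∧ x i ≤ hi i) ∧ |b i - x i| ≤ 24 * L := by
    intro x
    have hdist : dist b x ≤ 24 * L ↔ ∀ i, |b i - x i| ≤ 24 * L := by
      exact_mod_cast dist_le_natCast_iff (x := b) (y := x) (n := 24 * L)
    rw [hU, mem_Icc_pi_iff, hdist, ← forall_and]
  suffices h : ∃ σ : ℤˣ, ∀ t : ℤ, |b a - t| ≤ 9 * L + 7 → lo a ≤ t → t ≤ hi a →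
      lo a ≤ t + σ ∧ t + σ ≤ hi a ∧ |b a - (t + σ)| ≤ 24 * L by
    obtain ⟨σ, hσ⟩ := h
    refine ⟨σ, fun x hx hbx => (hU' _).2 fun i => ?_⟩
    have hbx' : dist b x ≤ (9 * L + 7 : ℕ) := by exact_mod_cast hbx
    have hxi := (hU' x).1 hx i
    by_cases hi' : i = a
    · subst hi'
      have := hσ (x i) (by exact_mod_cast dist_le_natCast_iff.1 hbx' i) hxi.1.1 hxi.1.2
      simpa [unitVec, and_assoc] using this
    · simpa [unitVec, hi'] using hxi
  rcases le_or_gt (b a + 24 * L) (hi a) with hba | hba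
  · refine ⟨1, fun t ht hlo hhi => ?_⟩
    simp only [Units.val_one, abs_le] at ht ⊢
    lia
  · refine ⟨-1, fun t ht hlo hhi => ?_⟩
    simp only [Units.val_neg, Units.val_one, abs_le] at ht ⊢
    lia

lemma dist_le_of_pow_lt_abs (hγ : 0 < γ) (hγ8 : γ ≤ 1 / 8) (hL : 1 ≤ L) (hLe : L ≤ 2 * e)
    (hside : lo a + 24 * L ≤ hi a) (hb : b ∈ Finset.Icc lo hi)
    (hgood : ∀ x ∈ Finset.Icc lo hi, 2 * L < dist b x →
      IsGoodSite γ E v a L e (Finset.Icc lo hi) x)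
    (hU : ∀ x, x ∈ U ↔ x ∈ Finset.Icc lo hi ∧ dist b x ≤ 24 * L)
    (h0 : ∀ y ∉ U, φ y = 0) (hφ : ∀ y, |φ y| ≤ 1)
    (hA : ∀ y ∈ U, |hamSub γ E v φ y| ≤ γ ^ (7 * L)) {x : Fin d → ℤ}
    (hx : γ ^ (3 * L) < |φ x|) : dist b x ≤ 9 * L + 7 := by
  by_contra! hfar
  obtain ⟨lo', hi', hadm, hmem⟩ :=
    exists_isAdmissibleBox (L := 24 * L) (by exact_mod_cast hside) hb
  obtain rfl : U = Finset.Icc lo' hi' := by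
    ext y
    rw [hU, hmem]
    push_cast
    rfl
  have hdecay : |φ x| ≤ 2 * (γ ^ (7 * L) / γ ^ L) + (γ ^ e) ^ 8 * 1 := by
    refine le_of_contraction_ball (g := fun y => |φ y|) (ρ := L + 1) (j := 8) (by positivity)
      (by positivity) (pow_le_half_of_le_half hγ (by linarith) (by lia)) zero_le_one
      (by positivity) (fun y hy c hc hball => ?_) fun y _ => hφ y
    have hby : 2 * L < dist b y := by
      have := dist_triangle_right b x y
      have := dist_comm x y
      push_cast at hy
      linarith
    exact abs_le_of_isGoodSite hγ (by positivity) hc (by have := hadm.2; lia)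
      (fun w hw => ((hU w).1 hw).1) (fun hyU => hgood y ((hU y).1 hyU).1 hby)
      (fun w hw _ => h0 w hw) hA hball
  have hsource : γ ^ (7 * L) / γ ^ L ≤ γ ^ (3 * L + 1) := by
    rw [div_le_iff₀ (by positivity), ← pow_add]
    exact pow_le_pow_of_le_one hγ.le (by linarith) (by lia)
  have hcontraction : (γ ^ e) ^ 8 ≤ γ ^ (3 * L + 1) := by
    rw [← pow_mul]
    exact pow_le_pow_of_le_one hγ.le (by linarith) (by lia)
  have h3L : 0 < γ ^ (3 * L) := by positivity
  have hγ3L : γ ^ (3 * L + 1) ≤ γ ^ (3 * L) * (1 / 8) := by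
    rw [pow_succ]
    gcongr
  linarith

end Record

section RecordIndices

variable {γ : ℝ} {f : ℕ → ℝ} {L T : ℕ}

-- The `r`-th record is the first index at which `f` is at most `γ ^ (3 * r)`.
lemma exists_record_indices (hγ : 0 < γ) (hγ1 : γ < 1) (hf0 : f 0 = 1)
    (hstep : ∀ i, γ ^ (3 * L) < f i → γ ^ 2 * f i ≤ f (i + 1))
    (hT : ∃ i ≤ T, f i ≤ γ ^ (3 * L)) :
    ∃ ι : Fin (L + 1) ↪o Fin (T + 1), ∀ r, γ ^ (3 * r.val + 2) ≤ f (ι r) ∧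
      f (ι r) ≤ γ ^ (3 * r.val) := by
  classical
  obtain ⟨t, htT, ht⟩ := hT
  have hanti : ∀ {m n : ℕ}, m ≤ n → γ ^ n ≤ γ ^ m := pow_le_pow_of_le_one hγ.le hγ1.le
  have hex : ∀ r : Fin (L + 1), ∃ i, f i ≤ γ ^ (3 * r.val) := fun r =>
    ⟨t, ht.trans (hanti (by lia))⟩
  have hupper : ∀ r, f (Nat.find (hex r)) ≤ γ ^ (3 * r.val) := fun r => Nat.find_spec (hex r)
  have hlower : ∀ r, γ ^ (3 * r.val + 2) ≤ f (Nat.find (hex r)) := by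
    intro r
    rcases hfind : Nat.find (hex r) with _ | i
    · rw [hf0]
      exact pow_le_one₀ hγ.le hγ1.le
    · have hi : γ ^ (3 * r.val) < f i := not_le.1 (Nat.find_min (hex r) (by lia))
      calc γ ^ (3 * r.val + 2) = γ ^ 2 * γ ^ (3 * r.val) := by ring
        _ ≤ γ ^ 2 * f i := by gcongr
        _ ≤ f (i + 1) := hstep i ((hanti (by lia)).trans_lt hi)
  have hmono : StrictMono fun r => Nat.find (hex r) := by
    intro r s hrs
    refine lt_of_le_of_ne (Nat.find_mono fun i hi => hi.trans (hanti (by lia))) fun heq => ?_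
    have : f (Nat.find (hex r)) = f (Nat.find (hex s)) := congrArg f heq
    have : γ ^ (3 * s.val) < γ ^ (3 * r.val + 2) := pow_lt_pow_right_of_lt_one₀ hγ hγ1 (by lia)
    linarith [hlower r, hupper s]
  have hlt : ∀ r, Nat.find (hex r) < T + 1 := fun r =>
    Nat.lt_succ_of_le ((Nat.find_min' (hex r) (ht.trans (hanti (by lia)))).trans htT)
  exact ⟨OrderEmbedding.ofStrictMono (fun r => ⟨Nat.find (hex r), hlt r⟩) fun r s h => hmono h,
    fun r => ⟨hlower r, hupper r⟩⟩

end RecordIndices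

section Wegner

variable {d : ℕ} {γ E : ℝ} {v φ : (Fin d → ℤ) → ℝ} {a : Fin d} {L e : ℕ}
  {lo hi b : Fin d → ℤ} {U : Finset (Fin d → ℤ)}

/-- Some function that almost solves `(H - E) φ = 0` on `U` is of order `γ ^ (3 * r)` at the
distinct sites `p r`. The potential at the sites `p r` is then determined by its other values. -/
def IsRecordSequence (γ E : ℝ) (v : (Fin d → ℤ) → ℝ) (L : ℕ) (U : Finset (Fin d → ℤ))
    (p : Fin (L + 1) → Fin d → ℤ) : Prop :=
  (∀ r, p r ∈ U) ∧ Function.Injective p ∧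
    ∃ φ : (Fin d → ℤ) → ℝ, (∀ y ∉ U, φ y = 0) ∧ (∀ y, |φ y| ≤ 1) ∧
      (∀ y ∈ U, |hamSub γ E v φ y| ≤ γ ^ (7 * L)) ∧
      ∀ r, γ ^ (3 * r.val + 2) ≤ |φ (p r)| ∧ |φ (p r)| ≤ γ ^ (3 * r.val)

/-- The sites visited at the times `ι r` by the walk that starts at `y` and has steps `c`. -/
def walkSites {T : ℕ} (y : Fin d → ℤ) (c : Fin T → ShortStep d) (ι : Fin (L + 1) ↪o Fin (T + 1))
    (r : Fin (L + 1)) : Fin d → ℤ :=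
  y + Fin.partialSum (fun i => (c i : Fin d → ℤ)) (ι r)

lemma iterate_add_eq_add_partialSum {G : Type*} [AddMonoid G] (h : G → G) (y : G) {T : ℕ}
    (i : Fin (T + 1)) :
    (fun x => x + h x)^[i] y =
      y + Fin.partialSum (fun j : Fin T => h ((fun x => x + h x)^[j] y)) i := by
  induction i using Fin.induction with
  | zero => simp
  | succ i ih =>
    simp only [Fin.val_castSucc] at ih
    rw [Fin.val_succ, Function.iterate_succ_apply', Fin.partialSum_succ, ← add_assoc, ← ih]

lemma exists_shortStep_map (hγ : 0 < γ) (hγd : 8 * d * γ ≤ 1) (hγ8 : γ ≤ 1 / 8) (hL : 1 ≤ L)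
    {σ : ℤˣ} (hdiag : ∀ x, |2 * d * γ + v x - E| ≤ 2)
    (hA : ∀ x, γ ^ (3 * L) < |φ x| → |hamSub γ E v φ (x + unitVec (a, σ))| ≤ γ ^ (7 * L)) :
    ∃ h : (Fin d → ℤ) → Fin d → ℤ, ∀ x, h x ∈ ShortStep d ∧ 1 ≤ (σ : ℤ) * h x a ∧
      (γ ^ (3 * L) < |φ x| → γ ^ 2 * |φ x| ≤ |φ (x + h x)|) := by
  rw [← Classical.skolem (p := fun x h => h ∈ ShortStep d ∧ 1 ≤ (σ : ℤ) * h a ∧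
    (γ ^ (3 * L) < |φ x| → γ ^ 2 * |φ x| ≤ |φ (x + h)|))]
  intro x
  by_cases hx : γ ^ (3 * L) < |φ x|
  · have hAx : |hamSub γ E v φ (x + unitVec (a, σ))| ≤ γ ^ 2 * |φ x| :=
      calc _ ≤ γ ^ (7 * L) := hA x hx
        _ ≤ γ ^ (2 + 3 * L) := pow_le_pow_of_le_one hγ.le (by linarith) (by lia)
        _ = γ ^ 2 * γ ^ (3 * L) := pow_add _ _ _
        _ ≤ γ ^ 2 * |φ x| := by gcongr
    have hx0 : φ x ≠ 0 := abs_pos.1 ((by positivity : 0 < γ ^ (3 * L)).trans hx)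
    obtain ⟨h, hmem, hσ, hle⟩ := exists_shortStep_le_abs hγ hγd hγ8 hx0 (hdiag _) hAx
    exact ⟨h, hmem, hσ, fun _ => hle⟩
  · exact ⟨unitVec (a, σ), (unitVec_mem_shortStep a σ).1, (unitVec_mem_shortStep a σ).2,
      fun h => absurd h hx⟩

lemma add_le_mul_iterate {h : (Fin d → ℤ) → Fin d → ℤ} {σ : ℤˣ}
    (hσ : ∀ x, 1 ≤ (σ : ℤ) * h x a) (y : Fin d → ℤ) (i : ℕ) :
    (σ : ℤ) * y a + i ≤ σ * (fun x => x + h x)^[i] y a := by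
  induction i with
  | zero => simp
  | succ i ih =>
    have := hσ ((fun x => x + h x)^[i] y)
    rw [Function.iterate_succ_apply', Pi.add_apply, mul_add]
    push_cast
    linarith

lemma injective_iterate_add {h : (Fin d → ℤ) → Fin d → ℤ} {σ : ℤˣ}
    (hσ : ∀ x, 1 ≤ (σ : ℤ) * h x a) (y : Fin d → ℤ) :
    Function.Injective fun i => (fun x => x + h x)^[i] y := by
  refine Function.Injective.of_comp (f := fun x : Fin d → ℤ => (σ : ℤ) * x a)
    (strictMono_nat_of_lt_succ fun i => ?_).injective
  have := add_le_mul_iterate hσ ((fun x => x + h x)^[i] y) 1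
  rw [Nat.cast_one, Function.iterate_one] at this
  simp only [Function.comp_apply, Function.iterate_succ_apply']
  lia

lemma exists_abs_iterate_le (hL : 20 ≤ L) {h : (Fin d → ℤ) → Fin d → ℤ} {σ : ℤˣ} {m : ℝ}
    (hσ : ∀ x, 1 ≤ (σ : ℤ) * h x a) (hnear : ∀ x, m < |φ x| → dist b x ≤ 9 * L + 7)
    (y : Fin d → ℤ) : ∃ i ≤ 19 * L, |φ ((fun x => x + h x)^[i] y)| ≤ m := by
  by_contra! hlarge
  have hdist : dist ((fun x => x + h x)^[19 * L] y) y ≤ (18 * L + 14 : ℕ) := by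
    have := hnear _ (hlarge 0 (by lia))
    have := hnear _ (hlarge _ le_rfl)
    have := dist_triangle_left ((fun x => x + h x)^[19 * L] y) y b
    rw [Function.iterate_zero_apply] at *
    push_cast
    linarith
  have hcoord := dist_le_natCast_iff.1 hdist a
  have hprogress := add_le_mul_iterate hσ y (19 * L)
  rw [abs_le] at hcoord
  obtain rfl | rfl := Int.units_eq_one_or σ <;> push_cast at hcoord hprogress <;> lia

/-- Unique continuation: a resonance of `U` leaves a trace in at least `L + 1` sites. -/
theorem exists_isRecordSequence (hγ : 0 < γ) (hγd : 8 * d * γ ≤ 1) (hγ8 : γ ≤ 1 / 8)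
    (hL : 20 ≤ L) (hLe : L ≤ 2 * e) (hv : ∀ x, v x ∈ Set.Icc 0 1) (hside : lo a + 48 * L ≤ hi a)
    (hb : b ∈ Finset.Icc lo hi)
    (hgood : ∀ x ∈ Finset.Icc lo hi, 2 * L < dist b x →
      IsGoodSite γ E v a L e (Finset.Icc lo hi) x)
    (hU : ∀ x, x ∈ U ↔ x ∈ Finset.Icc lo hi ∧ dist b x ≤ 24 * L)
    (hres : ¬ NonResonant γ E v (7 * L) U) :
    ∃ y ∈ U, ∃ (c : Fin (19 * L) → ShortStep d) (ι : Fin (L + 1) ↪o Fin (19 * L + 1)),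
      IsRecordSequence γ E v L U (walkSites y c ι) := by
  obtain ⟨φ, h0, hφ, hA, y, hyU, hy⟩ := exists_normalized_of_not_nonResonant hγ hres
  have hdiag := abs_diag_le hγ hγd hγ8 (by lia) hv hφ (hA y hyU) hy
  have hpos : ∀ n, 0 < γ ^ n := fun n => by positivity
  have hmem : ∀ x, φ x ≠ 0 → x ∈ U := fun x => not_imp_comm.1 (h0 x)
  have hnear : ∀ x, γ ^ (3 * L) < |φ x| → dist b x ≤ 9 * L + 7 := fun x =>
    dist_le_of_pow_lt_abs hγ hγ8 (by lia) hLe (by lia) hb hgood hU h0 hφ hA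
  obtain ⟨σ, hσ⟩ := exists_direction (by lia) hside hU
  obtain ⟨h, hh⟩ := exists_shortStep_map hγ hγd hγ8 (by lia) (a := a) (σ := σ) hdiag
    fun x hx => hA _ (hσ x (hmem x (abs_pos.1 ((hpos _).trans hx))) (hnear x hx))
  obtain ⟨ι, hι⟩ := exists_record_indices (f := fun i => |φ ((fun x => x + h x)^[i] y)|) hγ
    (by linarith) hy
    (fun i hi => by simpa only [Function.iterate_succ_apply'] using (hh _).2.2 hi)
    (exists_abs_iterate_le hL (fun x => (hh x).2.1) hnear y)
  have hsites : walkSites y (fun j => ⟨h ((fun x => x + h x)^[j] y), (hh _).1⟩) ι =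
      fun r => (fun x => x + h x)^[ι r] y :=
    funext fun r => (iterate_add_eq_add_partialSum h y (ι r)).symm
  refine ⟨y, hyU, fun j => ⟨h ((fun x => x + h x)^[j] y), (hh _).1⟩, ι, ?_⟩
  rw [hsites]
  exact ⟨fun r => hmem _ (abs_pos.1 ((hpos _).trans_le (hι r).1)),
    (injective_iterate_add (fun x => (hh x).2.1) y).comp (Fin.val_injective.comp ι.injective),
    φ, h0, hφ, hA, hι⟩

end Wegner

/-! ### Uniform probability on finite spaces -/

section UniformProbability

variable {Ω : Type*} [Fintype Ω] {A B : Ω → Prop}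

lemma prob_eq_card_div [DecidablePred A] :
    prob A = ((Finset.univ.filter A).card : ℝ) / Fintype.card Ω := by
  rw [prob]
  congr!

lemma prob_nonneg : 0 ≤ prob A := by
  rw [prob]
  positivity

lemma prob_eq_zero (h : ∀ ω, ¬ A ω) : prob A = 0 := by
  simp [prob, h]

lemma prob_mono (h : ∀ ω, A ω → B ω) : prob A ≤ prob B := by
  classical
  rw [prob, prob]
  gcongr with ω
  exact h ω

lemma prob_or_le (A B : Ω → Prop) : prob (fun ω => A ω ∨ B ω) ≤ prob A + prob B := by
  classical
  rw [prob_eq_card_div, prob_eq_card_div, prob_eq_card_div, ← add_div, Finset.filter_or]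
  gcongr
  exact_mod_cast Finset.card_union_le _ _

lemma prob_exists_le_card_mul {ι : Type*} (s : Finset ι) {A : ι → Ω → Prop} {c : ℝ}
    (h : ∀ i ∈ s, prob (A i) ≤ c) : prob (fun ω => ∃ i ∈ s, A i ω) ≤ s.card * c := by
  classical
  induction s using Finset.induction_on with
  | empty => simp [prob]
  | insert i s hi ih =>
    simp only [Finset.exists_mem_insert, Finset.forall_mem_insert] at h ⊢
    calc prob (fun ω => A i ω ∨ ∃ j ∈ s, A j ω)
        ≤ prob (A i) + prob fun ω => ∃ j ∈ s, A j ω := prob_or_le _ _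
      _ ≤ c + s.card * c := add_le_add h.1 (ih h.2)
      _ = (insert i s).card * c := by
          rw [Finset.card_insert_of_notMem hi]
          push_cast
          ring

lemma expect_sum {ι : Type*} (s : Finset ι) (f : ι → Ω → ℝ) :
    expect (fun ω => ∑ i ∈ s, f i ω) = ∑ i ∈ s, expect (f i) := by
  simp only [expect]
  rw [Finset.sum_comm, Finset.sum_div]

lemma expect_mono {f g : Ω → ℝ} (h : ∀ ω, f ω ≤ g ω) : expect f ≤ expect g := by
  rw [expect, expect]
  gcongr with ω
  exact h ω

lemma expect_le_prob_add [Nonempty Ω] {f : Ω → ℝ} {c : ℝ} (hc : 0 ≤ c) (h1 : ∀ ω, f ω ≤ 1)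
    (hB : ∀ ω, ¬ B ω → f ω ≤ c) : expect f ≤ prob B + c := by
  classical
  calc expect f ≤ expect fun ω => (if B ω then 1 else 0) + c := expect_mono fun ω => by
        by_cases h : B ω
        · simpa only [if_pos h] using (h1 ω).trans (le_add_of_nonneg_right hc)
        · simpa only [if_neg h, zero_add] using hB ω h
    _ = prob B + c := by
        rw [prob_eq_card_div, expect, Finset.sum_add_distrib, add_div, Finset.sum_boole,
          Finset.sum_const, nsmul_eq_mul, Finset.card_univ, mul_div_cancel_left₀ c (by positivity)]

end UniformProbability

section ProductSpace

variable {ι : Type*} [Fintype ι] [DecidableEq ι] {α : ι → Type*} [∀ i, Fintype (α i)]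
  [∀ i, Nonempty (α i)] {A B : (Π i, α i) → Prop}

-- Exchanging the coordinates in `S` of two independent samples preserves the uniform measure.
lemma prob_and_eq_mul {S T : Set ι} (hA : DependsOn A S) (hB : DependsOn B T)
    (hST : Disjoint S T) : prob (fun ω => A ω ∧ B ω) = prob A * prob B := by
  classical
  let swap : (Π i, α i) × (Π i, α i) → (Π i, α i) × (Π i, α i) :=
    fun q => (S.piecewise q.1 q.2, S.piecewise q.2 q.1)
  have hswap : Function.Involutive swap := fun q =>
    Prod.ext (by ext i; by_cases hi : i ∈ S <;> simp [swap, hi])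
      (by ext i; by_cases hi : i ∈ S <;> simp [swap, hi])
  have hAswap : ∀ q, A (swap q).1 = A q.1 := fun q => hA fun i hi => by simp [swap, hi]
  have hBswap : ∀ q, B (swap q).2 = B q.1 := fun q =>
    hB fun i hi => by simp [swap, hST.notMem_of_mem_right hi]
  have hcard : (Finset.univ.filter fun ω => A ω ∧ B ω).card * Fintype.card (Π i, α i) =
      (Finset.univ.filter A).card * (Finset.univ.filter B).card := by
    rw [← Finset.card_univ, ← Finset.card_product, ← Finset.card_product]
    exact Finset.card_bijective swap hswap.bijective fun q => by simp [hAswap, hBswap]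
  have : (Fintype.card (Π i, α i) : ℝ) ≠ 0 := by positivity
  rw [prob_eq_card_div, prob_eq_card_div, prob_eq_card_div, div_mul_div_comm,
    div_eq_div_iff (by positivity) (by positivity), ← mul_assoc]
  exact congrArg (· * _) (by exact_mod_cast hcard)

end ProductSpace

lemma prob_le_one_div_pow_card {ι α : Type*} [Fintype ι] [DecidableEq ι] [Fintype α] [Nonempty α]
    {A : (ι → α) → Prop} (K : Finset ι)
    (hA : ∀ ω ω', A ω → A ω' → (∀ i ∉ K, ω i = ω' i) → ω = ω') :
    prob A ≤ 1 / (Fintype.card α : ℝ) ^ K.card := by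
  classical
  have hcard : (Finset.univ.filter A).card ≤ Fintype.card α ^ Kᶜ.card := by
    rw [← Fintype.card_coe Kᶜ, ← Fintype.card_fun, ← Finset.card_univ]
    refine Finset.card_le_card_of_injOn Kᶜ.restrict (fun _ _ => Finset.mem_coe.2
      (Finset.mem_univ _)) fun ω hω ω' hω' h => ?_
    simp only [Finset.coe_filter, Finset.mem_univ, true_and, Set.mem_ofPred] at hω hω'
    exact hA ω ω' hω hω' fun i hi => congrFun h ⟨i, Finset.mem_compl.2 hi⟩
  rw [prob_eq_card_div, Fintype.card_fun, ← Finset.card_compl_add_card K, pow_add,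
    div_le_div_iff₀ (by positivity) (by positivity), one_mul, Nat.cast_mul, Nat.cast_pow,
    Nat.cast_pow]
  gcongr
  exact_mod_cast hcard

/-! ### The random potential -/

section Potential

variable {d N : ℕ} {Λ : Finset (Fin d → ℤ)} {x : Fin d → ℤ}

lemma potential_mem_Icc (hN : 2 ≤ N) (ω : Λ → Fin N) (x : Fin d → ℤ) :
    potential N Λ ω x ∈ Set.Icc 0 1 := by
  have hN' : (2 : ℝ) ≤ N := by exact_mod_cast hN
  rw [potential]
  split_ifs with h
  · have : ((ω ⟨x, h⟩ : ℕ) : ℝ) + 1 ≤ N := by exact_mod_cast (ω ⟨x, h⟩).2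
    exact ⟨div_nonneg (by positivity) (by linarith), (div_le_one (by linarith)).2 (by linarith)⟩
  · simp

lemma one_div_le_abs_potential_sub (hN : 2 ≤ N) {ω ω' : Λ → Fin N} (hx : x ∈ Λ)
    (h : ω ⟨x, hx⟩ ≠ ω' ⟨x, hx⟩) :
    1 / (N : ℝ) ≤ |potential N Λ ω x - potential N Λ ω' x| := by
  have hN' : (2 : ℝ) ≤ N := by exact_mod_cast hN
  have hone : (1 : ℝ) ≤ |((ω ⟨x, hx⟩ : ℕ) : ℝ) - (ω' ⟨x, hx⟩ : ℕ)| := by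
    exact_mod_cast Int.one_le_abs (sub_ne_zero.2 (Nat.cast_injective.ne (Fin.val_ne_of_ne h)))
  rw [potential, potential, dif_pos hx, dif_pos hx, ← sub_div, abs_div,
    abs_of_pos (by linarith : (0 : ℝ) < N - 1)]
  exact div_le_div₀ (abs_nonneg _) hone (by linarith) (by linarith)

lemma potential_congr {ω ω' : Λ → Fin N} (h : ∀ hx : x ∈ Λ, ω ⟨x, hx⟩ = ω' ⟨x, hx⟩) :
    potential N Λ ω x = potential N Λ ω' x := by
  rw [potential, potential]
  split_ifs with hx
  · rw [h hx]
  · rfl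

lemma eq_of_potential_eq (hN : 2 ≤ N) {ω ω' : Λ → Fin N} (hx : x ∈ Λ)
    (h : potential N Λ ω x = potential N Λ ω' x) : ω ⟨x, hx⟩ = ω' ⟨x, hx⟩ := by
  by_contra hne
  have hsep := one_div_le_abs_potential_sub hN hx hne
  rw [h, sub_self, abs_zero, one_div, inv_nonpos] at hsep
  have : (2 : ℝ) ≤ N := by exact_mod_cast hN
  linarith

lemma potential_eq_or_one_div_le (hN : 2 ≤ N) (ω ω' : Λ → Fin N) (x : Fin d → ℤ) :
    potential N Λ ω x = potential N Λ ω' x ∨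
      1 / (N : ℝ) ≤ |potential N Λ ω x - potential N Λ ω' x| := by
  by_cases h : ∀ hx : x ∈ Λ, ω ⟨x, hx⟩ = ω' ⟨x, hx⟩
  · exact Or.inl (potential_congr h)
  · obtain ⟨hx, hne⟩ := not_forall.1 h
    exact Or.inr (one_div_le_abs_potential_sub hN hx hne)

lemma abs_potential_sub_le_one (hN : 2 ≤ N) (ω ω' : Λ → Fin N) (x : Fin d → ℤ) :
    |potential N Λ ω x - potential N Λ ω' x| ≤ 1 :=
  have h := potential_mem_Icc hN ω x
  have h' := potential_mem_Icc hN ω' x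
  abs_sub_le_of_nonneg_of_le h.1 h.2 h'.1 h'.2

lemma prob_abs_potential_sub_lt_le (hN : 2 ≤ N) (hx : x ∈ Λ) (t : ℝ) :
    prob (fun ω : Λ → Fin N => |potential N Λ ω x - t| < 1 / (4 * N)) ≤ 1 / N := by
  have : NeZero N := ⟨by lia⟩
  have h := prob_le_one_div_pow_card
    (A := fun ω : Λ → Fin N => |potential N Λ ω x - t| < 1 / (4 * N)) {⟨x, hx⟩} ?_
  · simpa using h
  intro ω ω' hω hω' hoff
  have hclose : |potential N Λ ω x - potential N Λ ω' x| < 1 / N := by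
    have htri := abs_sub_le (potential N Λ ω x) t (potential N Λ ω' x)
    rw [abs_sub_comm t] at htri
    have : 1 / (4 * (N : ℝ)) = 1 / N / 4 := by field_simp
    have : 0 < 1 / (N : ℝ) := by positivity
    linarith
  ext1 i
  by_cases hi : i = ⟨x, hx⟩
  · rw [hi]
    exact eq_of_potential_eq hN hx
      ((potential_eq_or_one_div_le hN ω ω' x).resolve_right hclose.not_ge)
  · exact hoff i (by simpa using hi)

end Potential

/-! ### The probability of a record sequence -/

section Hopping

variable {d : ℕ} {γ E : ℝ} {U : Finset (Fin d → ℤ)} {φ φ' : (Fin d → ℤ) → ℝ}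

lemma dist1_eq_one_iff {x y : Fin d → ℤ} : dist1 x y = 1 ↔ ∃ u, y = x + unitVec u := by
  constructor
  · intro h
    obtain ⟨i, hi⟩ := (Finsupp.sum_eq_one_iff
      (Finsupp.equivFunOnFinite.symm fun i => (x i - y i).natAbs)).1
        (by rw [Finsupp.sum_fintype _ _ fun _ => rfl]; exact h)
    have hcoord : ∀ j, (x j - y j).natAbs = if i = j then 1 else 0 := fun j => by
      simpa [Finsupp.single_apply] using DFunLike.congr_fun hi j
    obtain ⟨σ, hσ⟩ : ∃ σ : ℤˣ, y i - x i = σ := by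
      have := hcoord i
      rw [if_pos rfl] at this
      rcases Int.natAbs_eq_iff.1 this with h1 | h1
      · exact ⟨-1, by push_cast at h1 ⊢; lia⟩
      · exact ⟨1, by push_cast at h1 ⊢; lia⟩
    refine ⟨(i, σ), funext fun j => ?_⟩
    by_cases hij : i = j
    · subst hij
      simp [unitVec, ← hσ]
    · have := hcoord j
      rw [if_neg hij, Int.natAbs_eq_zero] at this
      simp [unitVec, Pi.single_eq_of_ne' hij, (sub_eq_zero.1 this).symm]
  · rintro ⟨⟨i, σ⟩, rfl⟩
    rw [dist1, Finset.sum_eq_single i (fun j _ hj => by simp [unitVec, hj]) (by simp)]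
    simp [unitVec]

lemma unitVec_injective : Function.Injective (unitVec (d := d)) := by
  rintro ⟨i, σ⟩ ⟨j, τ⟩ h
  have hi := congrFun h i
  by_cases hij : i = j
  · subst hij
    simpa [unitVec, Units.ext_iff] using hi
  · simp [unitVec, hij] at hi

lemma sum_add_unitVec_eq_sum_ite (h0 : ∀ y ∉ U, φ y = 0) (x : Fin d → ℤ) :
    ∑ u, φ (x + unitVec u) = ∑ y ∈ U, (if dist1 x y = 1 then 1 else 0) * φ y := by
  classical
  have hinj : Function.Injective fun u => x + unitVec u :=
    (add_right_injective x).comp unitVec_injective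
  simp only [ite_mul, one_mul, zero_mul]
  rw [← Finset.sum_image (g := fun u => x + unitVec u) (f := φ) hinj.injOn, ← Finset.sum_filter]
  refine (Finset.sum_subset (fun y hy => ?_) fun y hy hyU => h0 y fun hU => hyU ?_).symm
  · obtain ⟨u, rfl⟩ := dist1_eq_one_iff.1 (Finset.mem_filter.1 hy).2
    exact Finset.mem_image_of_mem _ (Finset.mem_univ u)
  · obtain ⟨u, -, rfl⟩ := Finset.mem_image.1 hy
    exact Finset.mem_filter.2 ⟨hU, dist1_eq_one_iff.2 ⟨u, rfl⟩⟩

lemma sum_mul_hop_comm (h0 : ∀ y ∉ U, φ y = 0) (h0' : ∀ y ∉ U, φ' y = 0) :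
    ∑ x ∈ U, φ' x * ∑ u, φ (x + unitVec u) = ∑ x ∈ U, φ x * ∑ u, φ' (x + unitVec u) := by
  simp only [sum_add_unitVec_eq_sum_ite h0, sum_add_unitVec_eq_sum_ite h0', Finset.mul_sum]
  rw [Finset.sum_comm]
  refine Finset.sum_congr rfl fun x _ => Finset.sum_congr rfl fun y _ => ?_
  rw [dist1_comm]
  ring

lemma sum_potential_sub_mul_eq_wronskian (v v' : (Fin d → ℤ) → ℝ) (h0 : ∀ y ∉ U, φ y = 0)
    (h0' : ∀ y ∉ U, φ' y = 0) :
    ∑ x ∈ U, (v x - v' x) * (φ x * φ' x) =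
      ∑ x ∈ U, (φ' x * hamSub γ E v φ x - φ x * hamSub γ E v' φ' x) := by
  have hpoint : ∀ x, φ' x * hamSub γ E v φ x - φ x * hamSub γ E v' φ' x =
      (v x - v' x) * (φ x * φ' x) - γ * (φ' x * ∑ u, φ (x + unitVec u)) +
        γ * (φ x * ∑ u, φ' (x + unitVec u)) := fun x => by
    simp only [hamSub]
    ring
  simp only [hpoint]
  rw [Finset.sum_add_distrib, Finset.sum_sub_distrib, ← Finset.mul_sum, ← Finset.mul_sum,
    sum_mul_hop_comm h0 h0', sub_add_cancel]

lemma abs_sum_potential_sub_mul_le {v v' : (Fin d → ℤ) → ℝ} {η : ℝ} (h0 : ∀ y ∉ U, φ y = 0)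
    (h0' : ∀ y ∉ U, φ' y = 0) (hφ : ∀ y, |φ y| ≤ 1) (hφ' : ∀ y, |φ' y| ≤ 1)
    (hA : ∀ y ∈ U, |hamSub γ E v φ y| ≤ η) (hA' : ∀ y ∈ U, |hamSub γ E v' φ' y| ≤ η) :
    |∑ x ∈ U, (v x - v' x) * (φ x * φ' x)| ≤ U.card * (2 * η) := by
  rw [sum_potential_sub_mul_eq_wronskian (γ := γ) (E := E) v v' h0 h0', ← nsmul_eq_mul]
  refine (Finset.abs_sum_le_sum_abs _ _).trans (Finset.sum_le_card_nsmul _ _ _ fun x hx => ?_)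
  calc |φ' x * hamSub γ E v φ x - φ x * hamSub γ E v' φ' x|
      ≤ |φ' x * hamSub γ E v φ x| + |φ x * hamSub γ E v' φ' x| := abs_sub _ _
    _ = |φ' x| * |hamSub γ E v φ x| + |φ x| * |hamSub γ E v' φ' x| := by rw [abs_mul, abs_mul]
    _ ≤ 1 * η + 1 * η := add_le_add
        (mul_le_mul (hφ' x) (hA x hx) (abs_nonneg _) zero_le_one)
        (mul_le_mul (hφ x) (hA' x hx) (abs_nonneg _) zero_le_one)
    _ = 2 * η := by ring

end Hopping

section RecordProbability

variable {γ κ : ℝ} {L : ℕ} {w t : Fin (L + 1) → ℝ}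

lemma sum_Ioi_pow_le (hγ : 0 < γ) (hγ8 : γ ≤ 1 / 8) (r : Fin (L + 1)) :
    ∑ s ∈ Finset.Ioi r, γ ^ (6 * s.val) ≤ 2 * γ ^ (6 * r.val + 6) := by
  have hγ6 : γ ^ 6 ≤ 1 / 2 := pow_le_half_of_le_half hγ (by linarith) (by norm_num)
  calc ∑ s ∈ Finset.Ioi r, γ ^ (6 * s.val)
      = ∑ s ∈ Finset.Ico (r.val + 1) (L + 1), (γ ^ 6) ^ s := by
        rw [Finset.Ico_add_one_left_eq_Ioo, ← Fin.map_valEmbedding_Ioi, Finset.sum_map]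
        simp [pow_mul]
    _ ≤ (γ ^ 6) ^ (r.val + 1) / (1 - γ ^ 6) :=
        geom_sum_Ico_le_of_lt_one (by positivity) (by linarith)
    _ ≤ 2 * γ ^ (6 * r.val + 6) := by
        rw [div_le_iff₀ (by linarith), ← pow_mul, mul_add_one]
        nlinarith [pow_pos hγ (6 * r.val + 6)]

-- The first nonzero term dominates the sum, as the terms decay geometrically.
lemma eq_zero_of_abs_sum_mul_lt (hγ : 0 < γ) (hγ8 : γ ≤ 1 / 8) (hκ : 4 * γ ^ 2 ≤ κ)
    (hw : ∀ r, w r = 0 ∨ κ ≤ |w r|) (hw1 : ∀ r, |w r| ≤ 1)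
    (ht : ∀ r, γ ^ (6 * r.val + 4) ≤ |t r| ∧ |t r| ≤ γ ^ (6 * r.val))
    (hsum : 2 * |∑ r, w r * t r| < κ * γ ^ (6 * L + 4)) (r : Fin (L + 1)) : w r = 0 := by
  induction r using WellFoundedLT.induction with | ind r ih =>
  by_contra hr
  have hκ0 : 0 ≤ κ := (by positivity : 0 ≤ 4 * γ ^ 2).trans hκ
  have hsplit : ∑ s, w s * t s = w r * t r + ∑ s ∈ Finset.Ioi r, w s * t s := by
    refine .trans ?_ (Finset.add_sum_Ioi_eq_sum_Ici (f := fun s => w s * t s) r).symm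
    refine (Finset.sum_subset (Finset.subset_univ _) fun s _ hs => ?_).symm
    rw [ih s (by simpa using hs), zero_mul]
  have hfirst : κ * γ ^ (6 * r.val + 4) ≤ |w r * t r| := by
    rw [abs_mul]
    exact mul_le_mul ((hw r).resolve_left hr) (ht r).1 (by positivity) (abs_nonneg _)
  have htail : |∑ s ∈ Finset.Ioi r, w s * t s| ≤ 2 * γ ^ (6 * r.val + 6) := by
    refine (Finset.abs_sum_le_sum_abs _ _).trans
      ((Finset.sum_le_sum fun s _ => ?_).trans (sum_Ioi_pow_le hγ hγ8 r))
    rw [abs_mul, ← one_mul (γ ^ _)]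
    exact mul_le_mul (hw1 s) (ht s).2 (abs_nonneg _) zero_le_one
  have hfirst_le : |w r * t r| ≤ |∑ s, w s * t s| + |∑ s ∈ Finset.Ioi r, w s * t s| := by
    rw [eq_sub_of_add_eq hsplit.symm]
    exact abs_sub _ _
  have hlast : κ * γ ^ (6 * L + 4) ≤ κ * γ ^ (6 * r.val + 4) :=
    mul_le_mul_of_nonneg_left
      (pow_le_pow_of_le_one hγ.le (by linarith) (by have := r.2; lia)) hκ0
  have hratio : 4 * γ ^ (6 * r.val + 6) ≤ κ * γ ^ (6 * r.val + 4) :=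
    calc 4 * γ ^ (6 * r.val + 6) = 4 * γ ^ 2 * γ ^ (6 * r.val + 4) := by ring
      _ ≤ κ * γ ^ (6 * r.val + 4) := by gcongr
  linarith

variable {d N : ℕ} {E : ℝ} {v v' : (Fin d → ℤ) → ℝ} {Λ U : Finset (Fin d → ℤ)}
  {p : Fin (L + 1) → Fin d → ℤ}

lemma eq_of_isRecordSequence (hγ : 0 < γ) (hγ8 : γ ≤ 1 / 8) (hκ : 4 * γ ^ 2 ≤ κ)
    (hUγ : 4 * (U.card * γ ^ (7 * L)) < κ * γ ^ (6 * L + 4))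
    (h : IsRecordSequence γ E v L U p) (h' : IsRecordSequence γ E v' L U p)
    (hoff : ∀ x ∈ U, x ∉ Set.range p → v x = v' x)
    (hsep : ∀ r, v (p r) = v' (p r) ∨ κ ≤ |v (p r) - v' (p r)|)
    (hle : ∀ r, |v (p r) - v' (p r)| ≤ 1) (r : Fin (L + 1)) : v (p r) = v' (p r) := by
  obtain ⟨hpU, hp, φ, h0, hφ, hA, hφp⟩ := h
  obtain ⟨-, -, φ', h0', hφ', hA', hφp'⟩ := h'
  have hsum : ∑ r, (v (p r) - v' (p r)) * (φ (p r) * φ' (p r)) =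
      ∑ x ∈ U, (v x - v' x) * (φ x * φ' x) :=
    Finset.sum_of_injOn p hp.injOn (fun r _ => hpU r)
      (fun x hx hxp => by rw [hoff x hx (by simpa using hxp), sub_self, zero_mul]) fun _ _ => rfl
  have hwronskian := abs_sum_potential_sub_mul_le h0 h0' hφ hφ' hA hA'
  rw [← hsum] at hwronskian
  refine sub_eq_zero.1 (eq_zero_of_abs_sum_mul_lt hγ hγ8 hκ (w := fun r => v (p r) - v' (p r))
    (t := fun r => φ (p r) * φ' (p r)) (fun r => ?_) hle (fun r => ?_) (by linarith) r)
  · exact (hsep r).imp_left sub_eq_zero.2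
  · rw [abs_mul]
    constructor
    · calc γ ^ (6 * r.val + 4) = γ ^ (3 * r.val + 2) * γ ^ (3 * r.val + 2) := by ring
        _ ≤ |φ (p r)| * |φ' (p r)| :=
          mul_le_mul (hφp r).1 (hφp' r).1 (by positivity) (abs_nonneg _)
    · calc |φ (p r)| * |φ' (p r)| ≤ γ ^ (3 * r.val) * γ ^ (3 * r.val) :=
          mul_le_mul (hφp r).2 (hφp' r).2 (abs_nonneg _) (by positivity)
        _ = γ ^ (6 * r.val) := by ring

theorem prob_isRecordSequence_le (hN : 2 ≤ N) (hγ : 0 < γ) (hγ8 : γ ≤ 1 / 8)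
    (hγN : 4 * N * γ ^ 2 ≤ 1) (hUΛ : U ⊆ Λ)
    (hUγ : 4 * N * U.card * γ ^ (7 * L) < γ ^ (6 * L + 4)) (p : Fin (L + 1) → Fin d → ℤ) :
    prob (fun ω : Λ → Fin N => IsRecordSequence γ E (potential N Λ ω) L U p) ≤
      1 / (N : ℝ) ^ (L + 1) := by
  classical
  have : NeZero N := ⟨by lia⟩
  have hN0 : (0 : ℝ) < N := by positivity
  by_cases hp : (∀ r, p r ∈ U) ∧ Function.Injective p
  swap
  · rw [prob_eq_zero fun ω h => hp ⟨h.1, h.2.1⟩]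
    positivity
  let K : Finset Λ := Finset.univ.image fun r => ⟨p r, hUΛ (hp.1 r)⟩
  have hK : K.card = L + 1 := by
    rw [Finset.card_image_of_injective _ fun r s h => hp.2 (congrArg Subtype.val h),
      Finset.card_univ, Fintype.card_fin]
  have hKp : ∀ x (hx : x ∈ Λ), ⟨x, hx⟩ ∈ K ↔ x ∈ Set.range p := fun x hx => by simp [K]
  have hcount := prob_le_one_div_pow_card
    (A := fun ω : Λ → Fin N => IsRecordSequence γ E (potential N Λ ω) L U p) K ?_
  · rwa [hK, Fintype.card_fin] at hcount
  intro ω ω' hω hω' hoff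
  have hrange : ∀ r, potential N Λ ω (p r) = potential N Λ ω' (p r) :=
    eq_of_isRecordSequence hγ hγ8 (κ := 1 / N) (by rw [le_div_iff₀ hN0]; linarith)
      (by rw [one_div, lt_inv_mul_iff₀ hN0]; linarith) hω hω'
      (fun x _ hxp => potential_congr fun hx => hoff _ fun hxK => hxp ((hKp x hx).1 hxK))
      (fun r => potential_eq_or_one_div_le hN ω ω' _) fun r => abs_potential_sub_le_one hN ω ω' _
  ext1 ⟨x, hx⟩
  by_cases hxp : x ∈ Set.range p
  · obtain ⟨r, rfl⟩ := hxp
    exact eq_of_potential_eq hN hx (hrange r)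
  · exact hoff _ fun hxK => hxp ((hKp x hx).1 hxK)

end RecordProbability

/-! ### The probabilistic induction step -/

section WeakCoupling

/-- The couplings for which the multiscale analysis works: `γ` is small compared to the spacing of
the values of the potential. -/
structure IsWeakCoupling (d N : ℕ) (γ : ℝ) : Prop where
  pos : 0 < γ
  pow_mul_le_one : (8 * d * N * 8 ^ d : ℝ) ^ 4 * γ ≤ 1

namespace IsWeakCoupling

variable {d N : ℕ} {γ : ℝ}

lemma pow_mul_le_one_of_le (h : IsWeakCoupling d N γ) (hd : d ≠ 0) (hN : N ≠ 0) {c : ℝ}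
    (hc : 0 ≤ c) (hcC : c ≤ 8 * d * N * 8 ^ d) {k : ℕ} (hk : k ≤ 4) : c ^ k * γ ≤ 1 := by
  have hd1 : (1 : ℝ) ≤ d := by exact_mod_cast Nat.one_le_iff_ne_zero.2 hd
  have hN1 : (1 : ℝ) ≤ N := by exact_mod_cast Nat.one_le_iff_ne_zero.2 hN
  have hC : (1 : ℝ) ≤ 8 * d * N * 8 ^ d :=
    one_le_mul_of_one_le_of_one_le (by nlinarith) (one_le_pow₀ (by norm_num))
  calc c ^ k * γ ≤ (8 * d * N * 8 ^ d) ^ k * γ := by have := h.pos.le; gcongr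
    _ ≤ (8 * d * N * 8 ^ d) ^ 4 * γ := by have := h.pos.le; gcongr
    _ ≤ 1 := h.pow_mul_le_one

lemma pow_values_mul_le_one (h : IsWeakCoupling d N γ) (hd : d ≠ 0) (hN : N ≠ 0) {k : ℕ}
    (hk : k ≤ 4) : (8 * d * N : ℝ) ^ k * γ ≤ 1 :=
  h.pow_mul_le_one_of_le hd hN (by positivity)
    (le_mul_of_one_le_right (by positivity) (one_le_pow₀ (by norm_num))) hk

lemma values_mul_le_one (h : IsWeakCoupling d N γ) (hd : d ≠ 0) (hN : N ≠ 0) :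
    8 * N * γ ≤ 1 := by
  have hd1 : (1 : ℝ) ≤ d := by exact_mod_cast Nat.one_le_iff_ne_zero.2 hd
  have := h.pos
  calc 8 * N * γ ≤ (8 * d * N) ^ 1 * γ := by rw [pow_one]; gcongr; linarith
    _ ≤ 1 := h.pow_values_mul_le_one hd hN (by norm_num)

lemma dim_mul_le_one (h : IsWeakCoupling d N γ) (hd : d ≠ 0) (hN : N ≠ 0) :
    8 * d * γ ≤ 1 := by
  have hN1 : (1 : ℝ) ≤ N := by exact_mod_cast Nat.one_le_iff_ne_zero.2 hN
  have := h.pos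
  calc 8 * d * γ ≤ (8 * d * N) ^ 1 * γ := by
        rw [pow_one]
        exact mul_le_mul_of_nonneg_right (le_mul_of_one_le_right (by positivity) hN1) this.le
    _ ≤ 1 := h.pow_values_mul_le_one hd hN (by norm_num)

lemma le_one_eighth (h : IsWeakCoupling d N γ) (hd : d ≠ 0) (hN : N ≠ 0) : γ ≤ 1 / 8 := by
  have hd1 : (1 : ℝ) ≤ d := by exact_mod_cast Nat.one_le_iff_ne_zero.2 hd
  have := h.dim_mul_le_one hd hN
  have := h.pos
  nlinarith

lemma card_mul_pow_lt (h : IsWeakCoupling d N γ) (hd : d ≠ 0) (hN : 2 ≤ N) {L n : ℕ}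
    (hL : 9 ≤ L) (hn : n ≤ (L ^ 3) ^ d) : 4 * N * n * γ ^ (7 * L) < γ ^ (6 * L + 4) := by
  have hγ := h.pos
  have hd1 : (1 : ℝ) ≤ d := by exact_mod_cast Nat.one_le_iff_ne_zero.2 hd
  have hN1 : (2 : ℝ) ≤ N := by exact_mod_cast hN
  set B : ℝ := 4 * N * 8 ^ d with hB
  have hBγ : B ^ 2 * γ ≤ 1 := by
    refine h.pow_mul_le_one_of_le hd (by lia) (by positivity) ?_ (by norm_num)
    rw [hB]; gcongr; linarith
  have hB1 : 1 < B := one_lt_mul_of_lt_of_le (by linarith) (one_le_pow₀ (by norm_num))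
  have hn8 : n ≤ (8 ^ d) ^ L := calc
    n ≤ (L ^ 3) ^ d := hn
    _ ≤ ((2 ^ L) ^ 3) ^ d := by gcongr; exact Nat.lt_two_pow_self.le
    _ = (8 ^ d) ^ L := by
      rw [show (8 : ℕ) = 2 ^ 3 by norm_num]
      simp only [← pow_mul]
      ring_nf
  have hnB : 4 * N * (n : ℝ) < B ^ (2 * (L - 4)) := calc
    4 * N * (n : ℝ) ≤ (4 * N) ^ L * (8 ^ d) ^ L := by
      gcongr
      · exact le_self_pow₀ (by linarith) (by lia)
      · exact_mod_cast hn8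
    _ = B ^ L := (mul_pow _ _ _).symm
    _ < B ^ (2 * (L - 4)) := pow_lt_pow_right₀ hB1 (by lia)
  calc 4 * N * n * γ ^ (7 * L) < B ^ (2 * (L - 4)) * γ ^ (7 * L) := by gcongr
    _ = (B ^ 2 * γ) ^ (L - 4) * γ ^ (6 * L + 4) := by
      rw [show 7 * L = (L - 4) + (6 * L + 4) by lia, pow_add, pow_mul, mul_pow]
      ring
    _ ≤ γ ^ (6 * L + 4) := mul_le_of_le_one_left (by positivity) (pow_le_one₀ (by positivity) hBγ)

end IsWeakCoupling

end WeakCoupling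

section InductionStep

variable {d N : ℕ} {γ E P : ℝ} {v v' : (Fin d → ℤ) → ℝ} {a : Fin d} {L e M q : ℕ}
  {Λ R S T : Finset (Fin d → ℤ)} {lo hi x x' z : Fin d → ℤ}

lemma IsGoodBox.congr (h : ∀ y ∈ S, v y = v' y) (hg : IsGoodBox γ E v L e S x) :
    IsGoodBox γ E v' L e S x := fun ψ F m hF hm h0 hA =>
  hg ψ F m hF hm h0 fun y hy => by simpa only [hamSub, h y hy] using hA y hy

lemma isGoodBox_congr (h : ∀ y ∈ S, v y = v' y) :
    IsGoodBox γ E v L e S x ↔ IsGoodBox γ E v' L e S x :=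
  ⟨.congr h, .congr fun y hy => (h y hy).symm⟩

lemma dependsOn_isGoodBox_potential :
    DependsOn (fun ω : Λ → Fin N => ¬ IsGoodBox γ E (potential N Λ ω) L e S x)
      {i : Λ | (i : Fin d → ℤ) ∈ S} := fun _ _ h =>
  propext (not_congr (isGoodBox_congr fun _ hy => potential_congr fun _ => h _ hy))

lemma card_Icc_le (h : ∀ i, hi i ≤ lo i + L) : (Finset.Icc lo hi).card ≤ (L + 1) ^ d := by
  rw [Pi.card_Icc]
  calc ∏ i, (Finset.Icc (lo i) (hi i)).card ≤ (L + 1) ^ (Finset.univ : Finset (Fin d)).card :=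
        Finset.prod_le_pow_card _ _ _ fun i _ => by
          rw [Int.card_Icc]
          have := h i
          lia
    _ = (L + 1) ^ d := by rw [Finset.card_univ, Fintype.card_fin]

lemma card_Icc_le_of_isAdmissibleBox (h : IsAdmissibleBox a L x lo hi) :
    (Finset.Icc lo hi).card ≤ (2 * L + 1) ^ d :=
  card_Icc_le fun i => by
    have := h.1 i
    push_cast
    lia

open scoped Classical in
/-- The corners `(lo, hi)` of the admissible boxes around `x` contained in `R`. -/
def admissibleBoxes (a : Fin d) (L : ℕ) (R : Finset (Fin d → ℤ)) (x : Fin d → ℤ) :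
    Finset ((Fin d → ℤ) × (Fin d → ℤ)) :=
  (Finset.Icc (fun i => x i - L) x ×ˢ Finset.Icc x fun i => x i + L).filter fun B =>
    IsAdmissibleBox a L x B.1 B.2 ∧ Finset.Icc B.1 B.2 ⊆ R

lemma mem_admissibleBoxes {B : (Fin d → ℤ) × (Fin d → ℤ)} :
    B ∈ admissibleBoxes a L R x ↔ IsAdmissibleBox a L x B.1 B.2 ∧ Finset.Icc B.1 B.2 ⊆ R := by
  simp only [admissibleBoxes, Finset.mem_filter, Finset.mem_product, mem_Icc_pi_iff,
    and_iff_right_iff_imp]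
  exact fun h => ⟨fun i => by have := h.1.1 i; lia, fun i => by have := h.1.1 i; lia⟩

lemma card_admissibleBoxes_le : (admissibleBoxes a L R x).card ≤ (L + 1) ^ (2 * d) := by
  classical
  rw [admissibleBoxes]
  refine (Finset.card_filter_le _ _).trans ?_
  rw [Finset.card_product, two_mul, pow_add]
  exact Nat.mul_le_mul (card_Icc_le fun i => by simp) (card_Icc_le fun i => by simp)

lemma not_isGoodSite_iff : ¬ IsGoodSite γ E v a L e R x ↔
    ∃ B ∈ admissibleBoxes a L R x, ¬ IsGoodBox γ E v L e (Finset.Icc B.1 B.2) x := by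
  simp only [IsGoodSite, not_forall, mem_admissibleBoxes, Prod.exists, exists_prop, and_assoc]

/-- The multiscale estimate at the scale `L`: an admissible box in `Λ` is bad with probability at
most `P`. -/
def BadBoxProbLE (N : ℕ) (γ E : ℝ) (a : Fin d) (L e : ℕ) (Λ : Finset (Fin d → ℤ)) (P : ℝ) :
    Prop :=
  ∀ x lo hi, IsAdmissibleBox a L x lo hi → Finset.Icc lo hi ⊆ Λ →
    prob (fun ω : Λ → Fin N => ¬ IsGoodBox γ E (potential N Λ ω) L e (Finset.Icc lo hi) x) ≤ P

lemma disjoint_Icc_of_isAdmissibleBox {lo' hi' : Fin d → ℤ} (h : IsAdmissibleBox a L x lo hi)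
    (h' : IsAdmissibleBox a L x' lo' hi') (hx : 2 * L < dist x x') :
    Disjoint (Finset.Icc lo hi) (Finset.Icc lo' hi') := by
  refine Finset.disjoint_left.2 fun y hy hy' => hx.not_ge ?_
  rw [mem_Icc_pi_iff] at hy hy'
  have hclose : dist x x' ≤ (2 * L : ℕ) := dist_le_natCast_iff.2 fun i => by
    have := hy i
    have := hy' i
    have := h.1 i
    have := h'.1 i
    rw [abs_le]
    lia
  exact_mod_cast hclose

lemma prob_not_isGoodSite_and_le [NeZero N] (IH : BadBoxProbLE N γ E a L e Λ P) (hP : 0 ≤ P)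
    (hR : R ⊆ Λ) (hx : 2 * L < dist x x') :
    prob (fun ω : Λ → Fin N => ¬ IsGoodSite γ E (potential N Λ ω) a L e R x ∧
      ¬ IsGoodSite γ E (potential N Λ ω) a L e R x') ≤ ((L : ℝ) + 1) ^ (4 * d) * P ^ 2 := by
  have hpair : ∀ B ∈ admissibleBoxes a L R x ×ˢ admissibleBoxes a L R x',
      prob (fun ω : Λ → Fin N =>
        ¬ IsGoodBox γ E (potential N Λ ω) L e (Finset.Icc B.1.1 B.1.2) x ∧
        ¬ IsGoodBox γ E (potential N Λ ω) L e (Finset.Icc B.2.1 B.2.2) x') ≤ P ^ 2 := by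
    intro B hB
    obtain ⟨⟨hadm, hsub⟩, hadm', hsub'⟩ :=
      (Finset.mem_product.1 hB).imp mem_admissibleBoxes.1 mem_admissibleBoxes.1
    have hdisj := Finset.disjoint_left.1 (disjoint_Icc_of_isAdmissibleBox hadm hadm' hx)
    rw [prob_and_eq_mul dependsOn_isGoodBox_potential dependsOn_isGoodBox_potential
      (Set.disjoint_left.2 fun i hi hi' => hdisj hi hi'), sq]
    exact mul_le_mul (IH _ _ _ hadm (hsub.trans hR)) (IH _ _ _ hadm' (hsub'.trans hR))
      prob_nonneg hP
  calc _ ≤ prob _ := prob_mono fun ω hω => by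
        obtain ⟨⟨B, hB, hbad⟩, B', hB', hbad'⟩ :=
          hω.imp not_isGoodSite_iff.1 not_isGoodSite_iff.1
        exact ⟨(B, B'), Finset.mem_product.2 ⟨hB, hB'⟩, hbad, hbad'⟩
    _ ≤ _ := prob_exists_le_card_mul _ hpair
    _ ≤ ((L : ℝ) + 1) ^ (4 * d) * P ^ 2 := by
      gcongr
      rw [Finset.card_product]
      exact_mod_cast (Nat.mul_le_mul card_admissibleBoxes_le card_admissibleBoxes_le).trans_eq
        (by ring)

lemma prob_exists_isGoodSite_pair_le [NeZero N] (IH : BadBoxProbLE N γ E a L e Λ P) (hP : 0 ≤ P)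
    (hR : R ⊆ Λ) :
    prob (fun ω : Λ → Fin N => ∃ x ∈ R, ∃ x' ∈ R, 2 * L < dist x x' ∧
      ¬ IsGoodSite γ E (potential N Λ ω) a L e R x ∧
      ¬ IsGoodSite γ E (potential N Λ ω) a L e R x') ≤
        (R.card : ℝ) ^ 2 * (((L : ℝ) + 1) ^ (4 * d) * P ^ 2) := by
  rw [sq, mul_assoc]
  refine prob_exists_le_card_mul _ fun x _ => prob_exists_le_card_mul _ fun x' _ => ?_
  by_cases hx : 2 * L < dist x x'
  · exact (prob_mono fun ω => And.right).trans (prob_not_isGoodSite_and_le IH hP hR hx)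
  · rw [prob_eq_zero fun ω h => hx h.1]
    positivity

lemma prob_exists_isRecordSequence_le {U : (Fin d → ℤ) → Finset (Fin d → ℤ)} (hU : ∀ b, U b ⊆ R)
    (h : ∀ b ∈ R, ∀ p, prob (fun ω : Λ → Fin N =>
      IsRecordSequence γ E (potential N Λ ω) L (U b) p) ≤ P) (hP : 0 ≤ P) :
    prob (fun ω : Λ → Fin N => ∃ b ∈ R, ∃ y ∈ U b, ∃ (c : Fin (19 * L) → ShortStep d)
      (ι : Fin (L + 1) ↪o Fin (19 * L + 1)),
        IsRecordSequence γ E (potential N Λ ω) L (U b) (walkSites y c ι)) ≤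
      R.card ^ 2 * ((5 ^ d) ^ (19 * L) * 2 ^ (19 * L + 1) * P) := by
  have hsteps : (Fintype.card (Fin (19 * L) → ShortStep d) : ℝ) = (5 ^ d) ^ (19 * L) := by
    rw [Fintype.card_fun, Fintype.card_coe, Pi.card_Icc, Fintype.card_fin]
    simp
  have hindices : (Nat.card (Fin (L + 1) ↪o Fin (19 * L + 1)) : ℝ) ≤ 2 ^ (19 * L + 1) := by
    rw [Nat.card_congr Set.powersetCard.ofFinEmbEquiv, Set.powersetCard.card, Nat.card_fin]
    exact_mod_cast Nat.choose_le_two_pow _ _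
  classical
  have : Fintype (Fin (L + 1) ↪o Fin (19 * L + 1)) := Fintype.ofFinite _
  rw [Nat.card_eq_fintype_card] at hindices
  have hwalk : ∀ b ∈ R, ∀ y ∈ U b, prob (fun ω : Λ → Fin N =>
      ∃ k ∈ (Finset.univ : Finset ((Fin (19 * L) → ShortStep d) ×
        (Fin (L + 1) ↪o Fin (19 * L + 1)))),
        IsRecordSequence γ E (potential N Λ ω) L (U b) (walkSites y k.1 k.2)) ≤
      (5 ^ d) ^ (19 * L) * 2 ^ (19 * L + 1) * P := by
    intro b hb y _
    refine (prob_exists_le_card_mul _ fun k _ => h b hb _).trans ?_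
    rw [Finset.card_univ, Fintype.card_prod, Nat.cast_mul, hsteps]
    gcongr
  calc _ ≤ prob _ := prob_mono fun ω ⟨b, hb, y, hy, c, ι, hrec⟩ =>
        ⟨b, hb, y, hy, (c, ι), Finset.mem_univ _, hrec⟩
    _ ≤ _ := prob_exists_le_card_mul _ fun b hb =>
        (prob_exists_le_card_mul _ (hwalk b hb)).trans
          (mul_le_mul_of_nonneg_right (Nat.cast_le.2 (Finset.card_le_card (hU b))) (by positivity))
    _ = _ := by ring

lemma exists_not_isGoodSite_or_isRecordSequence (hγ : 0 < γ) (hγd : 8 * d * γ ≤ 1)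
    (hγ8 : γ ≤ 1 / 8) (hM : 60 ≤ M) (hML : M ≤ L) (hLe : L ≤ 2 * e) (hv : ∀ x, v x ∈ Set.Icc 0 1)
    (hadm : IsAdmissibleBox a (M * L) z lo hi) {U : (Fin d → ℤ) → Finset (Fin d → ℤ)}
    (hU : ∀ b x, x ∈ U b ↔ x ∈ Finset.Icc lo hi ∧ dist b x ≤ 24 * L)
    (hbad : ¬ IsGoodBox γ E v (M * L) (e * (M - 60)) (Finset.Icc lo hi) z) :
    (∃ x ∈ Finset.Icc lo hi, ∃ x' ∈ Finset.Icc lo hi, 2 * L < dist x x' ∧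
      ¬ IsGoodSite γ E v a L e (Finset.Icc lo hi) x ∧
      ¬ IsGoodSite γ E v a L e (Finset.Icc lo hi) x') ∨
    ∃ b ∈ Finset.Icc lo hi, ∃ y ∈ U b, ∃ (c : Fin (19 * L) → ShortStep d)
      (ι : Fin (L + 1) ↪o Fin (19 * L + 1)),
      IsRecordSequence γ E v L (U b) (walkSites y c ι) := by
  refine or_iff_not_imp_left.2 fun hclose => ?_
  obtain ⟨b, hb, hgood⟩ : ∃ b ∈ Finset.Icc lo hi, ∀ x ∈ Finset.Icc lo hi, 2 * L < dist b x →
      IsGoodSite γ E v a L e (Finset.Icc lo hi) x := by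
    by_cases h : ∃ b ∈ Finset.Icc lo hi, ¬ IsGoodSite γ E v a L e (Finset.Icc lo hi) b
    · obtain ⟨b, hb, hbad⟩ := h
      exact ⟨b, hb, fun x hx hbx => by_contra fun hx' => hclose ⟨b, hb, x, hx, hbx, hbad, hx'⟩⟩
    · push Not at h
      exact ⟨z, mem_Icc_pi_iff.2 fun i => ⟨(hadm.1 i).1, (hadm.1 i).2.1⟩, fun x hx _ => h x hx⟩
  have hside : lo a + 60 * L ≤ hi a := by
    have : lo a + (M * L : ℕ) ≤ hi a := hadm.2
    have : 60 * L ≤ M * L := by gcongr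
    lia
  by_cases hres : NonResonant γ E v (7 * L) (U b)
  · exact absurd (isGoodBox_of_nonResonant hγ hγd hγ8 hM hML hLe (by lia) hgood (hU b) hres) hbad
  · exact ⟨b, hb, exists_isRecordSequence hγ hγd hγ8 (by lia) hLe hv (by lia) hb hgood (hU b) hres⟩

lemma pair_bound_le {L : ℝ} (hL : 2 ≤ L) (hq : 15 * d ≤ q) (hd : d ≠ 0) :
    ((L ^ 3) ^ d) ^ 2 * ((L + 1) ^ (4 * d) * (1 / L ^ (2 * q)) ^ 2) ≤
      1 / 2 * (1 / L ^ (3 * q)) := by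
  have hL1 : L + 1 ≤ L ^ 2 := by nlinarith
  have hpow : 2 * L ^ (14 * d) ≤ L ^ q := calc
    2 * L ^ (14 * d) ≤ L * L ^ (14 * d) := by gcongr
    _ = L ^ (14 * d + 1) := by ring
    _ ≤ L ^ q := pow_le_pow_right₀ (by linarith) (by lia)
  calc ((L ^ 3) ^ d) ^ 2 * ((L + 1) ^ (4 * d) * (1 / L ^ (2 * q)) ^ 2)
      ≤ ((L ^ 3) ^ d) ^ 2 * ((L ^ 2) ^ (4 * d) * (1 / L ^ (2 * q)) ^ 2) := by gcongr
    _ = 2 * L ^ (14 * d) * (1 / 2 * (1 / L ^ (3 * q)) / L ^ q) := by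
      field_simp
      ring
    _ ≤ L ^ q * (1 / 2 * (1 / L ^ (3 * q)) / L ^ q) := by gcongr
    _ = 1 / 2 * (1 / L ^ (3 * q)) := by field_simp

lemma record_bound_le (hL : L ≠ 0) (hN : 4 * 2 ^ (6 * d + 3 * q) * (2 * 5 ^ d) ^ 19 ≤ N) :
    (((L : ℝ) ^ 3) ^ d) ^ 2 *
      ((5 ^ d) ^ (19 * L) * 2 ^ (19 * L + 1) * (1 / (N : ℝ) ^ (L + 1))) ≤
        1 / 2 * (1 / (L : ℝ) ^ (3 * q)) := by
  have hN1 : 1 ≤ N := (Nat.one_le_iff_ne_zero.2 (by positivity)).trans hN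
  have hcount : 4 * L ^ (6 * d + 3 * q) * (2 * 5 ^ d) ^ (19 * L) ≤ N ^ (L + 1) := calc
    _ ≤ 4 ^ L * (2 ^ L) ^ (6 * d + 3 * q) * (2 * 5 ^ d) ^ (19 * L) := by
      gcongr
      · exact Nat.le_self_pow hL 4
      · exact Nat.lt_two_pow_self.le
    _ = (4 * 2 ^ (6 * d + 3 * q) * (2 * 5 ^ d) ^ 19) ^ L := by
      rw [mul_pow _ _ L, mul_pow _ _ L, ← pow_mul, ← pow_mul, ← pow_mul, mul_comm L]
    _ ≤ N ^ L := Nat.pow_le_pow_left hN L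
    _ ≤ N ^ (L + 1) := Nat.pow_le_pow_right hN1 (by lia)
  have hcountR : 4 * (L : ℝ) ^ (6 * d + 3 * q) * (2 * 5 ^ d) ^ (19 * L) ≤ (N : ℝ) ^ (L + 1) := by
    exact_mod_cast hcount
  have : (0 : ℝ) < L := by positivity
  have : (0 : ℝ) < N := by positivity
  rw [one_div_mul_one_div, mul_one_div, mul_div_assoc', div_le_div_iff₀ (by positivity)
    (by positivity), one_mul]
  refine le_trans (le_of_eq ?_) hcountR
  ring

-- A box is bad only if it contains two distant bad sites of the previous scale, or if its bad sites
-- form one cluster and the neighbourhood of that cluster is resonant.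
theorem BadBoxProbLE.step (hd : d ≠ 0) (hM : 60 ≤ M) (hML : M * M ≤ L) (hLe : L ≤ 2 * e)
    (hq : 15 * d ≤ q) (hN2 : 2 ≤ N) (hN : 4 * 2 ^ (6 * d + 3 * q) * (2 * 5 ^ d) ^ 19 ≤ N)
    (hγ : IsWeakCoupling d N γ) (IH : BadBoxProbLE N γ E a L e Λ (1 / (L : ℝ) ^ (2 * q))) :
    BadBoxProbLE N γ E a (M * L) (e * (M - 60)) Λ (1 / ((M * L : ℕ) : ℝ) ^ (2 * q)) := by
  intro z lo hi hadm hsub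
  have hN0 : N ≠ 0 := by lia
  have : NeZero N := ⟨hN0⟩
  have hML' : M ≤ L := (Nat.le_mul_self M).trans hML
  have hL2 : (2 : ℝ) ≤ L := by exact_mod_cast (by lia : 2 ≤ L)
  set R := Finset.Icc lo hi with hR
  have hRcard : R.card ≤ (L ^ 3) ^ d := calc
    R.card ≤ (2 * (M * L) + 1) ^ d := card_Icc_le_of_isAdmissibleBox hadm
    _ ≤ (L ^ 3) ^ d := by
      have : 60 * M ≤ L := (Nat.mul_le_mul_right M hM).trans hML
      have : M * L * 60 ≤ L * L := by nlinarith
      gcongr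
      nlinarith
  let U : (Fin d → ℤ) → Finset (Fin d → ℤ) := fun b => R.filter fun x => dist b x ≤ 24 * L
  have hUR : ∀ b, U b ⊆ R := fun b => Finset.filter_subset _ _
  have hrecord : ∀ b ∈ R, ∀ p, prob (fun ω : Λ → Fin N =>
      IsRecordSequence γ E (potential N Λ ω) L (U b) p) ≤ 1 / (N : ℝ) ^ (L + 1) := fun b _ p =>
    prob_isRecordSequence_le hN2 hγ.pos (hγ.le_one_eighth hd hN0)
      (by nlinarith [hγ.values_mul_le_one hd hN0, hγ.le_one_eighth hd hN0, hγ.pos])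
      ((hUR b).trans hsub)
      (hγ.card_mul_pow_lt hd hN2 (by lia) ((Finset.card_le_card (hUR b)).trans hRcard)) p
  have hRcardR : (R.card : ℝ) ≤ ((L : ℝ) ^ 3) ^ d := by exact_mod_cast hRcard
  have hpairs : prob (fun ω : Λ → Fin N => ∃ x ∈ R, ∃ x' ∈ R, 2 * L < dist x x' ∧
      ¬ IsGoodSite γ E (potential N Λ ω) a L e R x ∧
      ¬ IsGoodSite γ E (potential N Λ ω) a L e R x') ≤ 1 / 2 * (1 / (L : ℝ) ^ (3 * q)) :=
    (prob_exists_isGoodSite_pair_le IH (by positivity) hsub).trans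
      (le_trans (by gcongr) (pair_bound_le hL2 hq hd))
  have hwalks := (prob_exists_isRecordSequence_le hUR hrecord (by positivity)).trans
    (le_trans (by gcongr) (record_bound_le (by lia) hN))
  calc _ ≤ prob _ := prob_mono fun ω => exists_not_isGoodSite_or_isRecordSequence hγ.pos
        (hγ.dim_mul_le_one hd hN0) (hγ.le_one_eighth hd hN0) hM hML' hLe (potential_mem_Icc hN2 ω)
        hadm fun b x => Finset.mem_filter
    _ ≤ _ := prob_or_le _ _
    _ ≤ 1 / 2 * (1 / (L : ℝ) ^ (3 * q)) + 1 / 2 * (1 / (L : ℝ) ^ (3 * q)) :=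
        add_le_add hpairs hwalks
    _ = 1 / ((L : ℝ) ^ 3) ^ q := by ring
    _ ≤ 1 / ((M * L : ℕ) : ℝ) ^ (2 * q) := by
      rw [pow_mul]
      have : 0 < M * L := Nat.mul_pos (by lia) (by lia)
      gcongr
      exact_mod_cast (by nlinarith : (M * L) ^ 2 ≤ L ^ 3)

end InductionStep

/-! ### Multiscale analysis -/

section InitialScale

variable {d N : ℕ} {γ E : ℝ} {v : (Fin d → ℤ) → ℝ} {R : Finset (Fin d → ℤ)} {x : Fin d → ℤ}
  {ψ : (Fin d → ℤ) → ℝ} {F m : ℝ}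

lemma abs_le_of_nonresonant_site (hγ : 0 ≤ γ) (hN : N ≠ 0)
    (hgap : 1 / (4 * N : ℝ) ≤ |v x - (E - 2 * d * γ)|) (hA : |hamSub γ E v ψ x| ≤ F)
    (hψ : ∀ u, |ψ (x + unitVec u)| ≤ m) : |ψ x| ≤ 4 * N * F + 8 * d * N * γ * m := by
  have : (0 : ℝ) < N := by positivity
  have hmul : 1 / (4 * N) * |ψ x| ≤ F + γ * (2 * d * m) := calc
    1 / (4 * N) * |ψ x| ≤ |v x - (E - 2 * d * γ)| * |ψ x| := by gcongr
    _ = |hamSub γ E v ψ x + γ * ∑ u, ψ (x + unitVec u)| := by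
      rw [← abs_mul, hamSub]
      ring_nf
    _ ≤ |hamSub γ E v ψ x| + γ * |∑ u, ψ (x + unitVec u)| := by
      refine (abs_add_le _ _).trans_eq ?_
      rw [abs_mul, abs_of_nonneg hγ]
    _ ≤ F + γ * (2 * d * m) := by gcongr; exact abs_sum_le_of_abs_le hψ
  rw [one_div, inv_mul_le_iff₀ (by positivity)] at hmul
  linarith

lemma isGoodBox_of_nonresonant_sites (hγ : IsWeakCoupling d N γ) (hd : d ≠ 0) (hN : 2 ≤ N) {n : ℕ}
    (hn : n ≠ 0) (hgap : ∀ y ∈ R, 1 / (4 * N : ℝ) ≤ |v y - (E - 2 * d * γ)|) :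
    IsGoodBox γ E v (4 * n) (3 * n) R x := by
  intro ψ F m hF hm h0 hA hψ
  have hN0 : N ≠ 0 := by lia
  have hγ0 := hγ.pos
  set ε : ℝ := 8 * d * N * γ
  have hε4 : ε ^ 4 ≤ γ ^ 3 := calc
    ε ^ 4 = (8 * d * N) ^ 4 * γ * γ ^ 3 := by ring
    _ ≤ γ ^ 3 := mul_le_of_le_one_left (by positivity)
      (hγ.pow_values_mul_le_one hd hN0 le_rfl)
  have hε2 : ε ≤ 1 / 2 := by
    refine le_of_pow_le_pow_left₀ four_ne_zero (by norm_num) (hε4.trans ?_)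
    calc γ ^ 3 ≤ (1 / 8) ^ 3 := by gcongr; exact hγ.le_one_eighth hd hN0
      _ ≤ (1 / 2) ^ 4 := by norm_num
  have hdecay : |ψ x| ≤ 2 * (4 * N * F) + ε ^ (4 * n) * m := by
    refine le_of_contraction_ball (g := fun y => |ψ y|) (ρ := 1) (by positivity) (by positivity)
      hε2 hm zero_le_one (fun y hy c hc hball => ?_) fun y hy => hψ y ?_
    · by_cases hyR : y ∈ R
      · exact abs_le_of_nonresonant_site hγ0.le hN0 (hgap y hyR) (hA y hyR)
          fun u => hball _ (dist_add_unitVec_le y u)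
      · rw [h0 y hyR (by linarith), abs_zero]
        positivity
    · linarith
  have hsource : 2 * (4 * N * F) ≤ F / γ ^ (4 * n) := by
    rw [le_div_iff₀ (by positivity)]
    calc 2 * (4 * N * F) * γ ^ (4 * n) ≤ 2 * (4 * N * F) * γ := by
          gcongr
          exact pow_le_of_le_one hγ0.le (by linarith [hγ.le_one_eighth hd hN0]) (by lia)
      _ = 8 * N * γ * F := by ring
      _ ≤ F := mul_le_of_le_one_left hF (hγ.values_mul_le_one hd hN0)
  calc |ψ x| ≤ 2 * (4 * N * F) + (ε ^ 4) ^ n * m := by rwa [← pow_mul]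
    _ ≤ F / γ ^ (4 * n) + (γ ^ 3) ^ n * m := by gcongr
    _ = F / γ ^ (4 * n) + γ ^ (3 * n) * m := by rw [pow_mul γ 3]

end InitialScale

section Scales

/-- The ratio of the `(k + 1)`-st and the `k`-th length scale. -/
def scaleRatio (k : ℕ) : ℕ := 2 ^ k * 1000

/-- The length scales of the multiscale analysis. -/
def scale : ℕ → ℕ
  | 0 => 4 * 250000
  | k + 1 => scaleRatio k * scale k

/-- The exponent of `γ` in the decay of the Green function of a good box at the scale `scale k`. -/
def decayExponent : ℕ → ℕ
  | 0 => 3 * 250000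
  | k + 1 => decayExponent k * (scaleRatio k - 60)

lemma le_scaleRatio (k : ℕ) : 1000 ≤ scaleRatio k :=
  Nat.le_mul_of_pos_left 1000 (by positivity)

lemma scaleRatio_mul_self_le (k : ℕ) : scaleRatio k * scaleRatio k ≤ scale k := by
  induction k with
  | zero => simp [scaleRatio, scale]
  | succ k ih =>
    have hratio := le_scaleRatio k
    have hdouble : scaleRatio (k + 1) = 2 * scaleRatio k := by simp only [scaleRatio]; ring
    rw [hdouble, scale]
    nlinarith

lemma scale_succ_le_sq (k : ℕ) : scale (k + 1) ≤ scale k ^ 2 := by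
  rw [sq, scale]
  exact Nat.mul_le_mul_right _ ((Nat.le_mul_self _).trans (scaleRatio_mul_self_le k))

lemma le_scale (k : ℕ) : 1000 * 1000 ≤ scale k :=
  (Nat.mul_le_mul (le_scaleRatio k) (le_scaleRatio k)).trans (scaleRatio_mul_self_le k)

lemma lt_scale (k : ℕ) : k < scale k := by
  have : k < 2 ^ k := Nat.lt_two_pow_self
  have : scaleRatio k ≤ scale k := (Nat.le_mul_self _).trans (scaleRatio_mul_self_le k)
  rw [scaleRatio] at this
  lia

-- The relative loss of the decay exponent at the step `k` is at most of order `2⁻ᵏ`, so that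
-- `decayExponent k / scale k` stays above `1 / 2 + 1 / (4 * 2 ^ k)`.
lemma mul_scale_le_mul_decayExponent (k : ℕ) :
    (2 * 2 ^ k + 1) * scale k ≤ 4 * 2 ^ k * decayExponent k := by
  induction k with
  | zero => simp [scale, decayExponent]
  | succ k ih =>
    obtain ⟨r, hr⟩ := Nat.exists_eq_add_of_le' ((by norm_num : 60 ≤ 1000).trans (le_scaleRatio k))
    have hloss : (4 * 2 ^ k + 1) * scaleRatio k ≤ 2 * r * (2 * 2 ^ k + 1) := by
      have hpos : 1 ≤ 2 ^ k := Nat.one_le_two_pow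
      rw [scaleRatio] at hr ⊢
      nlinarith
    rw [scale, decayExponent, show scaleRatio k - 60 = r by lia]
    calc (2 * 2 ^ (k + 1) + 1) * (scaleRatio k * scale k)
        = (4 * 2 ^ k + 1) * scaleRatio k * scale k := by ring
      _ ≤ 2 * r * (2 * 2 ^ k + 1) * scale k := Nat.mul_le_mul_right _ hloss
      _ = 2 * r * ((2 * 2 ^ k + 1) * scale k) := by ring
      _ ≤ 2 * r * (4 * 2 ^ k * decayExponent k) := Nat.mul_le_mul_left _ ih
      _ = 4 * 2 ^ (k + 1) * (decayExponent k * r) := by ring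

lemma scale_le_two_mul_decayExponent (k : ℕ) : scale k ≤ 2 * decayExponent k := by
  have := mul_scale_le_mul_decayExponent k
  have : 0 < 2 ^ k := by positivity
  nlinarith

lemma decayExponent_le_scale (k : ℕ) : decayExponent k ≤ scale k := by
  induction k with
  | zero => simp [scale, decayExponent]
  | succ k ih =>
    rw [scale, decayExponent, mul_comm]
    exact Nat.mul_le_mul (Nat.sub_le _ _) ih

end Scales

theorem badBoxProbLE_scale {d N q : ℕ} {γ : ℝ} (hd : d ≠ 0) (hq : 15 * d ≤ q) (hN2 : 2 ≤ N)
    (hN : 4 * 2 ^ (6 * d + 3 * q) * (2 * 5 ^ d) ^ 19 ≤ N)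
    (hN0 : (2 * scale 0 + 1) ^ d * scale 0 ^ (2 * q) ≤ N) (hγ : IsWeakCoupling d N γ) (E : ℝ)
    (a : Fin d) (Λ : Finset (Fin d → ℤ)) (k : ℕ) :
    BadBoxProbLE N γ E a (scale k) (decayExponent k) Λ (1 / (scale k : ℝ) ^ (2 * q)) := by
  induction k with
  | succ k ih =>
    exact ih.step hd ((by norm_num : 60 ≤ 1000).trans (le_scaleRatio k)) (scaleRatio_mul_self_le k)
      (scale_le_two_mul_decayExponent k) hq hN2 hN hγ
  | zero =>
    intro x lo hi hadm hsub
    have hscale : (0 : ℝ) < scale 0 := by simp [scale]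
    have hcard : ((Finset.Icc lo hi).card : ℝ) ≤ (2 * scale 0 + 1) ^ d := by
      exact_mod_cast card_Icc_le_of_isAdmissibleBox hadm
    have hN0' : (2 * scale 0 + 1 : ℝ) ^ d * scale 0 ^ (2 * q) ≤ N := by exact_mod_cast hN0
    calc _ ≤ prob fun ω : Λ → Fin N => ∃ y ∈ Finset.Icc lo hi,
          |potential N Λ ω y - (E - 2 * d * γ)| < 1 / (4 * N) := prob_mono fun ω hbad => by
          contrapose! hbad
          exact isGoodBox_of_nonresonant_sites hγ hd hN2 (by norm_num) hbad
      _ ≤ (Finset.Icc lo hi).card * (1 / N) := prob_exists_le_card_mul _ fun y hy =>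
          prob_abs_potential_sub_lt_le hN2 (hsub hy) _
      _ ≤ (2 * scale 0 + 1) ^ d * (1 / N) := by gcongr
      _ ≤ 1 / (scale 0 : ℝ) ^ (2 * q) := by
          rwa [mul_one_div, div_le_div_iff₀ (by positivity) (by positivity), one_mul]

/-! ### The local density of states -/

section SpectralKernel

variable {n : Type*} [Fintype n]

lemma sq_sum_mul_le_of_orthonormal {ι : Type*} {u : ι → EuclideanSpace ℝ n} (hu : Orthonormal ℝ u)
    (s : Finset ι) (c : ι → ℝ) (y : n) : (∑ i ∈ s, c i * u i y) ^ 2 ≤ ∑ i ∈ s, c i ^ 2 := calc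
  (∑ i ∈ s, c i * u i y) ^ 2 = (∑ i ∈ s, c i • u i) y ^ 2 := by simp
  _ ≤ ∑ z, (∑ i ∈ s, c i • u i) z ^ 2 :=
    Finset.single_le_sum (f := fun z => (∑ i ∈ s, c i • u i) z ^ 2) (fun _ _ => sq_nonneg _)
      (Finset.mem_univ y)
  _ = ∑ i ∈ s, c i ^ 2 := by
    rw [← EuclideanSpace.real_norm_sq_eq, ← real_inner_self_eq_norm_sq, hu.inner_sum]
    simp [sq]

variable [DecidableEq n] {M : Matrix n n ℝ} (hM : M.IsHermitian)

open scoped Classical in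
/-- The entry `(x, y)` of the spectral projection of `M` to the energies in `[a, b]`. Its diagonal
is the local density of states. -/
def spectralKernel (a b : ℝ) (x y : n) : ℝ :=
  ∑ i with hM.eigenvalues i ∈ Set.Icc a b, hM.eigenvectorBasis i x * hM.eigenvectorBasis i y

lemma countEigIn_eq_sum_spectralKernel (a b : ℝ) :
    (countEigIn hM a b : ℝ) = ∑ x, spectralKernel hM a b x x := by
  have hnorm : ∀ i, ∑ x, hM.eigenvectorBasis i x * hM.eigenvectorBasis i x = 1 := fun i => by
    simp only [← sq, ← EuclideanSpace.real_norm_sq_eq, hM.eigenvectorBasis.orthonormal.1 i,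
      one_pow]
  simp only [spectralKernel, countEigIn]
  rw [Finset.sum_comm, Finset.sum_congr rfl fun i _ => hnorm i, Finset.sum_const, nsmul_one]

lemma sq_spectralKernel_le (a b : ℝ) (x y : n) :
    spectralKernel hM a b x y ^ 2 ≤ spectralKernel hM a b x x := by
  simp only [spectralKernel, ← sq (hM.eigenvectorBasis _ x)]
  exact sq_sum_mul_le_of_orthonormal hM.eigenvectorBasis.orthonormal _ _ y

lemma mulVec_spectralKernel_sub (a b E : ℝ) (x y : n) :
    M.mulVec (spectralKernel hM a b x) y - E * spectralKernel hM a b x y =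
      ∑ i with hM.eigenvalues i ∈ Set.Icc a b,
        (hM.eigenvalues i - E) * hM.eigenvectorBasis i x * hM.eigenvectorBasis i y := by
  classical
  have heig : ∀ i, ∑ z, M y z * hM.eigenvectorBasis i z =
      hM.eigenvalues i * hM.eigenvectorBasis i y := fun i =>
    congrFun (hM.mulVec_eigenvectorBasis i) y
  simp only [Matrix.mulVec, dotProduct, spectralKernel, Finset.mul_sum]
  rw [Finset.sum_comm, ← Finset.sum_sub_distrib]
  refine Finset.sum_congr (by congr) fun i _ => ?_
  simp only [mul_left_comm (M y _), ← Finset.mul_sum, heig]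
  ring

lemma sq_mulVec_spectralKernel_sub_le (E δ : ℝ) (x y : n) :
    (M.mulVec (spectralKernel hM (E - δ) (E + δ) x) y -
        E * spectralKernel hM (E - δ) (E + δ) x y) ^ 2 ≤
      δ ^ 2 * spectralKernel hM (E - δ) (E + δ) x x := by
  rw [mulVec_spectralKernel_sub]
  refine (sq_sum_mul_le_of_orthonormal hM.eigenvectorBasis.orthonormal _ _ y).trans ?_
  rw [spectralKernel, Finset.mul_sum]
  refine Finset.sum_le_sum fun i hi => ?_
  have hmem := Set.mem_Icc.1 (Finset.mem_filter.1 hi).2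
  rw [mul_pow, ← sq (hM.eigenvectorBasis i x)]
  exact mul_le_mul_of_nonneg_right (sq_le_sq' (by linarith) (by linarith)) (sq_nonneg _)

end SpectralKernel

section Anderson

variable {d N : ℕ} {γ E δ : ℝ} {v φ : (Fin d → ℤ) → ℝ} {Λ : Finset (Fin d → ℤ)} {x : Fin d → ℤ}

lemma hamOn_mulVec_sub (h0 : ∀ y ∉ Λ, φ y = 0) (x : Λ) :
    (hamOn d γ v Λ).mulVec (fun y => φ y) x - E * φ x = hamSub γ E v φ x := by
  have hentry : ∀ y, hamEntry d γ v x y * φ y =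
      (if (x : Fin d → ℤ) = y then (2 * d * γ + v x) * φ y else 0) -
        γ * ((if dist1 (x : Fin d → ℤ) y = 1 then 1 else 0) * φ y) := fun y => by
    rw [hamEntry]
    split_ifs <;> ring
  have hsum : (hamOn d γ v Λ).mulVec (fun y => φ y) x = ∑ y ∈ Λ, hamEntry d γ v x y * φ y :=
    Finset.sum_coe_sort Λ fun y => hamEntry d γ v x y * φ y
  rw [hsum, hamSub, sum_add_unitVec_eq_sum_ite h0]
  simp only [hentry]
  rw [Finset.sum_sub_distrib, ← Finset.mul_sum, Finset.sum_ite_eq, if_pos x.2]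
  ring

/-- A column at `x` of a spectral projection of the Hamiltonian on `Λ` to `[E - δ, E + δ]`,
extended by zero to `ℤ^d`: a function supported in `Λ` that solves `(H - E) φ = 0` up to `δ` and is
controlled by its own value at `x`, the local density of states. -/
structure IsSpectralColumn (γ E δ : ℝ) (v : (Fin d → ℤ) → ℝ) (Λ : Finset (Fin d → ℤ))
    (x : Fin d → ℤ) (φ : (Fin d → ℤ) → ℝ) : Prop where
  eq_zero : ∀ y ∉ Λ, φ y = 0
  abs_le : ∀ y, |φ y| ≤ √(φ x)
  abs_hamSub_le : ∀ y ∈ Λ, |hamSub γ E v φ y| ≤ δ * √(φ x)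

lemma IsSpectralColumn.self_nonneg (h : IsSpectralColumn γ E δ v Λ x φ) : 0 ≤ φ x := by
  by_contra! hneg
  have := h.abs_le x
  rw [Real.sqrt_eq_zero_of_nonpos hneg.le, abs_nonpos_iff] at this
  exact hneg.ne this

lemma IsSpectralColumn.self_le_sq (h : IsSpectralColumn γ E δ v Λ x φ) {A : ℝ} (hA : 0 ≤ A)
    (hle : |φ x| ≤ A * √(φ x)) : φ x ≤ A ^ 2 := by
  rcases h.self_nonneg.eq_or_lt with h0 | hpos
  · rw [← h0]
    positivity
  · refine Real.sqrt_le_left hA |>.1 (le_of_mul_le_mul_right ?_ (Real.sqrt_pos.2 hpos))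
    rw [Real.mul_self_sqrt hpos.le]
    exact (le_abs_self _).trans hle

lemma IsSpectralColumn.self_le_one (h : IsSpectralColumn γ E δ v Λ x φ) : φ x ≤ 1 := by
  simpa using h.self_le_sq zero_le_one (by simpa using h.abs_le x)

open scoped Classical in
lemma isSpectralColumn_spectralKernel (hδ : 0 ≤ δ) (x : Λ) :
    IsSpectralColumn γ E δ v Λ x fun y => if hy : y ∈ Λ then
      spectralKernel (hamOn_isHermitian d γ v Λ) (E - δ) (E + δ) x ⟨y, hy⟩ else 0 := by
  refine ⟨fun y hy => dif_neg hy, fun y => ?_, fun y hy => ?_⟩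
  · by_cases hy : y ∈ Λ
    · simpa [hy] using Real.abs_le_sqrt (sq_spectralKernel_le _ (E - δ) (E + δ) x ⟨y, hy⟩)
    · simp [hy]
  · have hres := Real.abs_le_sqrt (sq_mulVec_spectralKernel_sub_le
      (hamOn_isHermitian d γ v Λ) E δ x ⟨y, hy⟩)
    rw [Real.sqrt_mul (sq_nonneg _), Real.sqrt_sq hδ] at hres
    rw [← hamOn_mulVec_sub (fun y hy => dif_neg hy) ⟨y, hy⟩]
    simpa [hy] using hres

lemma expect_countEigIn_le (hN : N ≠ 0) (hδ : 0 ≤ δ) {P c : ℝ} (hc : 0 ≤ c)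
    {B : (Fin d → ℤ) → (Λ → Fin N) → Prop} (hB : ∀ x ∈ Λ, prob (B x) ≤ P)
    (hgood : ∀ x ∈ Λ, ∀ ω, ¬ B x ω → ∀ φ,
      IsSpectralColumn γ E δ (potential N Λ ω) Λ x φ → φ x ≤ c) :
    expect (fun ω : Λ → Fin N =>
        (countEigIn (hamOn_isHermitian d γ (potential N Λ ω) Λ) (E - δ) (E + δ) : ℝ))
      ≤ Λ.card * (P + c) := by
  have : NeZero N := ⟨hN⟩
  have hlocal : ∀ x : Λ, expect (fun ω : Λ → Fin N =>
      spectralKernel (hamOn_isHermitian d γ (potential N Λ ω) Λ) (E - δ) (E + δ) x x) ≤ P + c := by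
    intro x
    have hcol := fun ω : Λ → Fin N =>
      isSpectralColumn_spectralKernel (γ := γ) (E := E) (v := potential N Λ ω) hδ x
    refine (expect_le_prob_add hc (fun ω => ?_) fun ω hω => ?_).trans
      (add_le_add_left (hB x x.2) c)
    · simpa using (hcol ω).self_le_one
    · simpa using hgood x x.2 ω hω _ (hcol ω)
  simp only [countEigIn_eq_sum_spectralKernel]
  rw [expect_sum]
  simpa [mul_add] using Finset.sum_le_sum fun x (_ : x ∈ Finset.univ) => hlocal x

end Anderson

/-! ### Log-Hölder continuity -/

section EnergyWindows

variable {d N : ℕ} {γ δ : ℝ}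

lemma expect_countEigIn_le_card (hN : N ≠ 0) (hδ : 0 ≤ δ) (E : ℝ) (Λ : Finset (Fin d → ℤ)) :
    expect (fun ω : Λ → Fin N =>
        (countEigIn (hamOn_isHermitian d γ (potential N Λ ω) Λ) (E - δ) (E + δ) : ℝ)) ≤ Λ.card := by
  simpa using expect_countEigIn_le (B := fun _ _ => False) (P := 0) hN hδ zero_le_one
    (fun _ _ => (prob_eq_zero fun _ => id).le) fun _ _ _ _ _ h => h.self_le_one

lemma expect_countEigIn_le_of_le_coupling (hd : d ≠ 0) (hN : 2 ≤ N) (hγ : IsWeakCoupling d N γ)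
    (hδ : 0 ≤ δ) (hδγ : δ ≤ γ) (E : ℝ) (Λ : Finset (Fin d → ℤ)) :
    expect (fun ω : Λ → Fin N =>
        (countEigIn (hamOn_isHermitian d γ (potential N Λ ω) Λ) (E - δ) (E + δ) : ℝ))
      ≤ Λ.card * (1 / N + 1 / N) := by
  have hN0 : N ≠ 0 := by lia
  have hγ0 := hγ.pos
  have : (0 : ℝ) < N := by positivity
  have hd1 : (1 : ℝ) ≤ d := by exact_mod_cast Nat.one_le_iff_ne_zero.2 hd
  refine expect_countEigIn_le hN0 hδ (by positivity)
    (fun x hx => prob_abs_potential_sub_lt_le hN hx (E - 2 * d * γ)) fun x hx ω hgap φ hφ => ?_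
  rw [not_lt] at hgap
  have hsmall : |φ x| ≤ 12 * d * N * γ * √(φ x) := calc
    |φ x| ≤ 4 * N * (δ * √(φ x)) + 8 * d * N * γ * √(φ x) :=
      abs_le_of_nonresonant_site hγ0.le hN0 hgap (hφ.abs_hamSub_le x hx) fun u => hφ.abs_le _
    _ ≤ 4 * N * (d * γ * √(φ x)) + 8 * d * N * γ * √(φ x) := by
      gcongr
      exact hδγ.trans (le_mul_of_one_le_left hγ0.le hd1)
    _ = 12 * d * N * γ * √(φ x) := by ring
  refine (hφ.self_le_sq (by positivity) hsmall).trans ?_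
  rw [le_div_iff₀ (by positivity)]
  have hsq := hγ.pow_values_mul_le_one hd hN0 (by norm_num : 2 ≤ 4)
  have hγN := hγ.values_mul_le_one hd hN0
  calc (12 * d * N * γ) ^ 2 * N = (8 * d * N) ^ 2 * γ * (9 / 4 * N * γ) := by ring
    _ ≤ 1 := mul_le_one₀ hsq (by positivity) (by nlinarith)

lemma exists_add_le_of_le_diam1 {lo hi : Fin d → ℤ} {L : ℕ} (hd : d ≠ 0) (hL : L ≠ 0)
    (h : d * L ≤ diam1 (Finset.Icc lo hi)) : ∃ a, lo a + L ≤ hi a := by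
  by_contra! hshort
  have hdL : 0 < d * L := by positivity
  refine h.not_gt ((Finset.sup_lt_iff (by simpa using hdL)).2 fun p hp => ?_)
  have : Nonempty (Fin d) := ⟨⟨0, by lia⟩⟩
  rw [Finset.mem_product, mem_Icc_pi_iff, mem_Icc_pi_iff] at hp
  calc dist1 p.1 p.2 < ∑ _i : Fin d, L :=
        Finset.sum_lt_sum_of_nonempty Finset.univ_nonempty fun i _ => by
          have := hp.1 i
          have := hp.2 i
          have := hshort i
          lia
    _ = d * L := by simp

lemma expect_countEigIn_le_of_badBoxProbLE (hN : N ≠ 0) (hγ : 0 < γ) (hγ1 : γ ≤ 1) {L e : ℕ}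
    {E P : ℝ} {a : Fin d} {lo hi : Fin d → ℤ}
    (hbad : BadBoxProbLE N γ E a L e (Finset.Icc lo hi) P) (hLe : L ≤ 2 * e)
    (hside : lo a + L ≤ hi a) (hδ : 0 ≤ δ) (hδγ : δ ≤ γ ^ (L + e)) :
    expect (fun ω : Finset.Icc lo hi → Fin N => (countEigIn (hamOn_isHermitian d γ
        (potential N (Finset.Icc lo hi) ω) (Finset.Icc lo hi)) (E - δ) (E + δ) : ℝ))
      ≤ (Finset.Icc lo hi).card * (P + 4 * γ ^ L) := by
  choose! lo' hi' hadm hmem using fun x (hx : x ∈ Finset.Icc lo hi) =>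
    exists_isAdmissibleBox hside hx
  have hsub : ∀ x ∈ Finset.Icc lo hi, Finset.Icc (lo' x) (hi' x) ⊆ Finset.Icc lo hi :=
    fun x hx y hy => ((hmem x hx y).1 hy).1
  refine expect_countEigIn_le hN hδ (by positivity)
    (fun x hx => hbad x _ _ (hadm x hx) (hsub x hx)) fun x hx ω hgood φ hφ => ?_
  rw [not_not] at hgood
  have hsmall : |φ x| ≤ 2 * γ ^ e * √(φ x) := calc
    |φ x| ≤ δ * √(φ x) / γ ^ L + γ ^ e * √(φ x) :=
      hgood φ _ _ (by positivity) (by positivity)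
        (fun y hy hxy => hφ.eq_zero y fun hyΛ => hy ((hmem x hx y).2 ⟨hyΛ, hxy⟩))
        (fun y hy => hφ.abs_hamSub_le y (hsub x hx hy)) fun y _ => hφ.abs_le y
    _ ≤ γ ^ (L + e) * √(φ x) / γ ^ L + γ ^ e * √(φ x) := by gcongr
    _ = 2 * γ ^ e * √(φ x) := by
      rw [pow_add]
      field_simp
      ring
  calc φ x ≤ (2 * γ ^ e) ^ 2 := hφ.self_le_sq (by positivity) hsmall
    _ = 4 * γ ^ (2 * e) := by ring
    _ ≤ 4 * γ ^ L := mul_le_mul_of_nonneg_left (pow_le_pow_of_le_one hγ.le hγ1 hLe) (by norm_num)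

end EnergyWindows

section Constants

variable {d N P : ℕ} {γ : ℝ}

/-- The number of values of the potential from which on the bound with exponent at most `P`
holds. -/
def minValues (d P : ℕ) : ℕ :=
  2 + 4 * 2 ^ (6 * d + 3 * (15 * d + P + d * P + 1)) * (2 * 5 ^ d) ^ 19 +
    (2 * scale 0 + 1) ^ d * scale 0 ^ (2 * (15 * d + P + d * P + 1)) + 2 * (2 * d * scale 0) ^ P

/-- The largest coupling for which the bound with exponent at most `P` is proved. -/
def maxCoupling (d P N : ℕ) : ℝ := 1 / ((8 * d * N * 8 ^ d) ^ 4 + 8 * (8 * d) ^ P)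

lemma maxCoupling_pos (hd : d ≠ 0) : 0 < maxCoupling d P N := by
  rw [maxCoupling]
  positivity

lemma maxCoupling_lt_one (hd : d ≠ 0) : maxCoupling d P N < 1 := by
  have hd1 : (1 : ℝ) ≤ d := by exact_mod_cast Nat.one_le_iff_ne_zero.2 hd
  have hpow : (1 : ℝ) ≤ (8 * d) ^ P := one_le_pow₀ (by linarith)
  have : (0 : ℝ) ≤ (8 * d * N * 8 ^ d) ^ 4 := by positivity
  rw [maxCoupling, div_lt_one (by positivity)]
  linarith

lemma mul_le_one_of_le_maxCoupling (hd : d ≠ 0) (hγ : γ ≤ maxCoupling d P N) :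
    (8 * d * N * 8 ^ d : ℝ) ^ 4 * γ + 8 * (8 * d : ℝ) ^ P * γ ≤ 1 := by
  rwa [maxCoupling, le_div_iff₀ (by positivity), mul_comm, add_mul] at hγ

lemma isWeakCoupling_of_le_maxCoupling (hd : d ≠ 0) (hγ0 : 0 < γ) (hγ : γ ≤ maxCoupling d P N) :
    IsWeakCoupling d N γ :=
  ⟨hγ0, le_of_add_le_of_nonneg_left (mul_le_one_of_le_maxCoupling hd hγ) (by positivity)⟩

lemma pow_mul_le_one_of_le_maxCoupling (hd : d ≠ 0) (hγ0 : 0 < γ) (hγ : γ ≤ maxCoupling d P N) :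
    8 * (8 * d : ℝ) ^ P * γ ≤ 1 :=
  le_of_add_le_of_nonneg_right (mul_le_one_of_le_maxCoupling hd hγ) (by positivity)

lemma one_div_pow_add_le {q L : ℕ} (hd : d ≠ 0) (hq : P + d * P + 1 ≤ q) (hL : 2 ≤ L)
    (hγ : 0 < γ) (hγP : 8 * (8 * d : ℝ) ^ P * γ ≤ 1) :
    1 / (L : ℝ) ^ (2 * q) + 4 * γ ^ L ≤ 1 / (2 * d * (L : ℝ) ^ 2) ^ P := by
  have hL2 : (2 : ℝ) ≤ L := by exact_mod_cast hL
  have hd1 : (1 : ℝ) ≤ d := by exact_mod_cast Nat.one_le_iff_ne_zero.2 hd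
  have hprob : 2 * (2 * d * (L : ℝ) ^ 2) ^ P ≤ (L : ℝ) ^ (2 * q) := by
    have hdL : (2 * d : ℝ) ≤ L ^ (d + 1) := calc
      (2 * d : ℝ) ≤ 2 ^ (d + 1) := by
        rw [pow_succ']
        gcongr
        exact_mod_cast d.lt_two_pow_self.le
      _ ≤ L ^ (d + 1) := by gcongr
    have hexp : (d + 3) * P + 1 ≤ 2 * q := by
      have : P ≤ d * P := Nat.le_mul_of_pos_left _ (Nat.pos_of_ne_zero hd)
      lia
    calc 2 * (2 * d * (L : ℝ) ^ 2) ^ P ≤ L * (L ^ (d + 1) * (L : ℝ) ^ 2) ^ P := by gcongr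
      _ = (L : ℝ) ^ ((d + 3) * P + 1) := by rw [← pow_add, ← pow_mul, pow_succ']
      _ ≤ (L : ℝ) ^ (2 * q) := pow_le_pow_right₀ (by linarith) hexp
  have hdecay : 8 * γ ^ L * (2 * d * (L : ℝ) ^ 2) ^ P ≤ 1 := calc
    8 * γ ^ L * (2 * d * (L : ℝ) ^ 2) ^ P
        ≤ 8 ^ L * γ ^ L * ((2 * d) ^ L * ((2 : ℝ) ^ L) ^ 2) ^ P := by
      gcongr
      · exact le_self_pow₀ (by norm_num) (by lia)
      · exact le_self_pow₀ (by linarith) (by lia)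
      · exact_mod_cast L.lt_two_pow_self.le
    _ = 8 ^ L * γ ^ L * ((2 * d * 2 ^ 2) ^ L) ^ P := by
      rw [mul_pow (2 * (d : ℝ)), pow_right_comm (2 : ℝ) L 2]
    _ = (8 * (8 * d : ℝ) ^ P * γ) ^ L := by
      rw [show (2 * d * 2 ^ 2 : ℝ) = 8 * d by ring]
      ring
    _ ≤ 1 := pow_le_one₀ (by positivity) hγP
  have hprob' : 1 / (L : ℝ) ^ (2 * q) ≤ 1 / (2 * (2 * d * (L : ℝ) ^ 2) ^ P) :=
    one_div_le_one_div_of_le (by positivity) hprob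
  calc 1 / (L : ℝ) ^ (2 * q) + 4 * γ ^ L
      ≤ 1 / (2 * (2 * d * (L : ℝ) ^ 2) ^ P) + 1 / (2 * (2 * d * (L : ℝ) ^ 2) ^ P) := by
        gcongr
        rw [le_div_iff₀ (by positivity)]
        linarith
    _ = 1 / (2 * d * (L : ℝ) ^ 2) ^ P := by field_simp; norm_num

lemma one_div_pow_le_rpow_neg {s S p : ℝ} (hs : 1 ≤ s) (hsS : s ≤ S) (hp : p ≤ P) :
    1 / S ^ P ≤ s ^ (-p) := by
  rw [Real.rpow_neg (by linarith), ← one_div]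
  refine one_div_le_one_div_of_le (Real.rpow_pos_of_pos (by linarith) _) ?_
  calc s ^ p ≤ s ^ (P : ℝ) := Real.rpow_le_rpow_of_exponent_le hs hp
    _ = s ^ P := Real.rpow_natCast _ _
    _ ≤ S ^ P := by gcongr

lemma exists_scale_between {s c : ℝ} (hc : 1 ≤ c) (hs : c * scale 0 ≤ s) :
    ∃ k, c * scale k ≤ s ∧ s ≤ c * (scale k : ℝ) ^ 2 := by
  classical
  have hlarge : ∃ k, s < c * scale k := by
    obtain ⟨k, hk⟩ := exists_nat_gt s
    refine ⟨k, hk.trans_le ((Nat.cast_le.2 (lt_scale k).le).trans ?_)⟩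
    exact le_mul_of_one_le_left (Nat.cast_nonneg _) hc
  obtain ⟨k, hk⟩ := Nat.exists_eq_succ_of_ne_zero fun h0 : Nat.find hlarge = 0 =>
    (Nat.find_spec hlarge).not_ge (by rwa [h0])
  refine ⟨k, not_lt.1 (Nat.find_min hlarge (by lia)), ?_⟩
  calc s ≤ c * scale (k + 1) := by simpa only [hk] using (Nat.find_spec hlarge).le
    _ ≤ c * (scale k : ℝ) ^ 2 := by
      gcongr
      exact_mod_cast scale_succ_le_sq k

end Constants

section LogHolder

variable {d N P : ℕ} {γ p s : ℝ}

lemma expect_countEigIn_rpow_le_of_le (hd : d ≠ 0) (hN : minValues d P ≤ N)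
    (hγ : IsWeakCoupling d N γ) (hp : p ≤ P) (hs : 1 ≤ s) (hsmall : s ≤ 2 * d * scale 0) (E : ℝ)
    (Λ : Finset (Fin d → ℤ)) :
    expect (fun ω : Λ → Fin N =>
        (countEigIn (hamOn_isHermitian d γ (potential N Λ ω) Λ) (E - γ ^ s) (E + γ ^ s) : ℝ))
      ≤ Λ.card * s ^ (-p) := by
  have hγ0 := hγ.pos
  have hN2 : 2 ≤ N := by
    rw [minValues] at hN
    lia
  have hγ8 := hγ.le_one_eighth hd (by lia)
  have hNP : 2 * (2 * d * scale 0 : ℝ) ^ P ≤ N := by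
    have : 2 * (2 * d * scale 0) ^ P ≤ N := by
      rw [minValues] at hN
      lia
    exact_mod_cast this
  have hδγ : γ ^ s ≤ γ := by
    simpa using Real.rpow_le_rpow_of_exponent_ge hγ0 (by linarith) hs
  refine (expect_countEigIn_le_of_le_coupling hd hN2 hγ (by positivity) hδγ E Λ).trans ?_
  gcongr
  refine le_trans ?_ (one_div_pow_le_rpow_neg hs hsmall hp)
  have : 0 < scale 0 := by simp [scale]
  rw [← add_div, div_le_div_iff₀ (by positivity) (by positivity)]
  linarith

lemma expect_countEigIn_rpow_le_of_ge (hd : d ≠ 0) (hN : minValues d P ≤ N) (hγ0 : 0 < γ)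
    (hγ : γ ≤ maxCoupling d P N) (hp : p ≤ P) {lo hi : Fin d → ℤ}
    (hlarge : 2 * d * scale 0 ≤ s) (hdiam : s ≤ diam1 (Finset.Icc lo hi) / 2) (E : ℝ) :
    expect (fun ω : Finset.Icc lo hi → Fin N => (countEigIn (hamOn_isHermitian d γ
        (potential N (Finset.Icc lo hi) ω) (Finset.Icc lo hi)) (E - γ ^ s) (E + γ ^ s) : ℝ))
      ≤ (Finset.Icc lo hi).card * s ^ (-p) := by
  have hγ1 := hγ.trans_lt (maxCoupling_lt_one hd)
  have hd1 : (1 : ℝ) ≤ d := by exact_mod_cast Nat.one_le_iff_ne_zero.2 hd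
  rw [minValues] at hN
  obtain ⟨k, hks, hsk⟩ := exists_scale_between (by linarith : (1 : ℝ) ≤ 2 * d) hlarge
  have hk := le_scale k
  have hkR : (1000 * 1000 : ℝ) ≤ scale k := by exact_mod_cast hk
  have hkd : (scale k : ℝ) ≤ d * scale k := le_mul_of_one_le_left (by linarith) hd1
  obtain ⟨a, ha⟩ : ∃ a, lo a + scale k ≤ hi a := by
    refine exists_add_le_of_le_diam1 hd (by lia) ?_
    have : (d * scale k : ℝ) ≤ diam1 (Finset.Icc lo hi) := by linarith
    exact_mod_cast this
  have hδγ : γ ^ s ≤ γ ^ (scale k + decayExponent k) := by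
    rw [← Real.rpow_natCast]
    refine Real.rpow_le_rpow_of_exponent_ge hγ0 hγ1.le ?_
    have : (decayExponent k : ℝ) ≤ scale k := by exact_mod_cast decayExponent_le_scale k
    push_cast
    linarith
  have hbad := badBoxProbLE_scale (q := 15 * d + P + d * P + 1) hd (by lia) (by lia) (by lia)
    (by lia) (isWeakCoupling_of_le_maxCoupling hd hγ0 hγ) E a (Finset.Icc lo hi) k
  refine (expect_countEigIn_le_of_badBoxProbLE (by lia) hγ0 hγ1.le hbad
    (scale_le_two_mul_decayExponent k) ha (by positivity) hδγ).trans ?_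
  gcongr
  exact (one_div_pow_add_le hd (by lia) (by lia) hγ0
    (pow_mul_le_one_of_le_maxCoupling hd hγ0 hγ)).trans
    (one_div_pow_le_rpow_neg (by linarith) hsk hp)

lemma expect_countEigIn_rpow_le (hd : d ≠ 0) (hN : minValues d P ≤ N) (hγ0 : 0 < γ)
    (hγ : γ ≤ maxCoupling d P N) (hp0 : 0 ≤ p) (hp : p ≤ P) {Λ : Finset (Fin d → ℤ)}
    (hΛ : IsRect Λ) (hs : 0 < s) (hdiam : s ≤ diam1 Λ / 2) (E : ℝ) :
    expect (fun ω : Λ → Fin N =>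
        (countEigIn (hamOn_isHermitian d γ (potential N Λ ω) Λ) (E - γ ^ s) (E + γ ^ s) : ℝ))
      ≤ Λ.card * s ^ (-p) := by
  obtain ⟨lo, hi, rfl⟩ := hΛ
  rcases le_total s 1 with h1 | h1
  · refine (expect_countEigIn_le_card (by rw [minValues] at hN; lia) (by positivity) E _).trans ?_
    refine le_mul_of_one_le_right (Nat.cast_nonneg _) ?_
    exact Real.one_le_rpow_of_pos_of_le_one_of_nonpos hs h1 (by linarith)
  rcases le_total s (2 * d * scale 0) with hsmall | hlarge
  · exact expect_countEigIn_rpow_le_of_le hd hN (isWeakCoupling_of_le_maxCoupling hd hγ0 hγ) hp h1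
      hsmall E _
  · exact expect_countEigIn_rpow_le_of_ge hd hN hγ0 hγ hp hlarge hdiam E

end LogHolder

/-- **Theorem 1.1** (log-Hölder continuity of the density of states).
For every dimension `d ≥ 1` there is `p₀` such that for all `p ≥ p₀` there is `N₀`
(depending on `p`) such that for all integers `N ≥ N₀` there is `γ₀ ∈ (0,1)` (depending
on `N`) such that for all `γ ∈ (0,γ₀]`, every finite rectangle `Λ ⊂ ℤ^d`, every `E ∈ ℝ`
and every `δ` with `γ^(diam Λ / 2) ≤ δ < 1`, the expected number of eigenvalues of the
Anderson Hamiltonian in `I_δ(E) = [E-δ,E+δ]` is at most `|Λ| (log_γ δ)^(-p)`. -/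
theorem density_of_states_logHolder :
    ∀ d : ℕ, 1 ≤ d →
    ∃ p₀ : ℝ, ∀ p : ℝ, p₀ ≤ p →
    ∃ N₀ : ℕ, ∀ N : ℕ, N₀ ≤ N →
    ∃ γ₀ : ℝ, 0 < γ₀ ∧ γ₀ < 1 ∧
    ∀ γ : ℝ, 0 < γ → γ ≤ γ₀ →
    ∀ Λ : Finset (Fin d → ℤ), IsRect Λ →
    ∀ E δ : ℝ, γ ^ ((diam1 Λ : ℝ) / 2) ≤ δ → δ < 1 →
    expect (fun ω : ↥Λ → Fin N =>
        (countEigIn (hamOn_isHermitian d γ (potential N Λ ω) Λ) (E - δ) (E + δ) : ℝ))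
      ≤ (Λ.card : ℝ) * (Real.log δ / Real.log γ) ^ (-p) := by
  intro d hd
  have hd0 : d ≠ 0 := Nat.one_le_iff_ne_zero.1 hd
  refine ⟨0, fun p hp => ?_⟩
  obtain ⟨P, hP⟩ := exists_nat_ge p
  refine ⟨minValues d P, fun N hN => ⟨maxCoupling d P N, maxCoupling_pos hd0,
    maxCoupling_lt_one hd0, fun γ hγ0 hγ Λ hΛ E δ hδ hδ1 => ?_⟩⟩
  have hγ1 : γ < 1 := hγ.trans_lt (maxCoupling_lt_one hd0)
  have hδ0 : 0 < δ := (Real.rpow_pos_of_pos hγ0 _).trans_le hδ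
  have hdiam : Real.logb γ δ ≤ diam1 Λ / 2 :=
    (Real.logb_le_iff_le_rpow_of_base_lt_one hγ0 hγ1 hδ0).2 hδ
  have hbound := expect_countEigIn_rpow_le hd0 hN hγ0 hγ hp hP hΛ
    (Real.logb_pos_of_base_lt_one hγ0 hγ1 hδ0 hδ1) hdiam E
  rwa [Real.rpow_logb hγ0 hγ1.ne hδ0] at hbound
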